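/- arXiv:2512.15255 — 2 statements merged into one kernel-verified Lean document; each statement's English description precedes it below -/
import Mathlib

section
/- Let u be a very weak solution with integrability deficit δ ∈ (0,1), and assume the p-intrinsic hypotheses. Then for every θ ∈ ((q−1)/p, δ] and every s ∈ [2ρ, 4ρ] there exists a constant c = c(data) such that ⨍_{Q^π_s(z₀)} (|∇u|^{p−1} + a(z)|∇u|^{q−1} + |F|^{p−1} + a(z)|F|^{q−1}) dz ≤ c ⨍_{Q^π_s(z₀)} (|∇u| + |F|)^{p−1} dz + c π^{−1+p/q} ⨍_{Q^π_s(z₀)} a(z)^{(q−1)/q} (|∇u|^{q−1} + |F|^{q−1}) dz + c (⨍_{Q^π_s(z₀)} (|∇u| + |F|)^{θp} dz)^{(p−1)/(θp)}. -/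
open MeasureTheory Set Metric Filter
open scoped ENNReal NNReal Topology BigOperators Classical

noncomputable section

namespace DoublePhase

/-- Spatial points: ℝⁿ. -/
abbrev Spc (n : ℕ) : Type := EuclideanSpace ℝ (Fin n)
/-- Space-time points `z = (x,t)`. -/
abbrev Pt (n : ℕ) : Type := Spc n × ℝ
/-- Values in ℝᴺ. -/
abbrev Vec (N : ℕ) : Type := Fin N → ℝ
/-- Matrices in ℝ^{N×n}. -/
abbrev Mat (N n : ℕ) : Type := Fin N → Fin n → ℝ

/-- Euclidean inner product on ℝᴺ. -/
def vdot {N : ℕ} (v w : Vec N) : ℝ := ∑ i, v i * w i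
/-- Euclidean norm on ℝᴺ. -/
def vnorm {N : ℕ} (v : Vec N) : ℝ := Real.sqrt (vdot v v)
/-- Euclidean inner product on ℝ^{N×n}. -/
def mdot {N n : ℕ} (A B : Mat N n) : ℝ := ∑ i, ∑ j, A i j * B i j
/-- Euclidean norm on ℝ^{N×n}. -/
def mnorm {N n : ℕ} (A : Mat N n) : ℝ := Real.sqrt (mdot A A)

/-- Parabolic cylinder `Q_{r,s}(z₀) = B_r(x₀) × (t₀−s, t₀+s)`. -/
def Qrs {n : ℕ} (z₀ : Pt n) (r s : ℝ) : Set (Pt n) :=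
  (Metric.ball z₀.1 r) ×ˢ (Set.Ioo (z₀.2 - s) (z₀.2 + s))

/-- Standard parabolic cylinder `Q_ρ(z₀) = B_ρ(x₀) × (t₀−ρ², t₀+ρ²)`. -/
def Qc {n : ℕ} (z₀ : Pt n) (ρ : ℝ) : Set (Pt n) := Qrs z₀ ρ (ρ ^ 2)

/-- The double-phase function `H(z,s) = s^p + a(z) s^q`. -/
def Hf {n : ℕ} (a : Pt n → ℝ) (p q : ℝ) (z : Pt n) (s : ℝ) : ℝ := s ^ p + a z * s ^ q

/-- `p`-intrinsic cylinder `Q_ρ^λ(z₀) = B_ρ(x₀) × (t₀−λ^{2−p}ρ², t₀+λ^{2−p}ρ²)`. -/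
def Qp {n : ℕ} (p : ℝ) (z₀ : Pt n) (lam ρ : ℝ) : Set (Pt n) :=
  Qrs z₀ ρ (lam ^ (2 - p) * ρ ^ 2)

/-- `(p,q)`-intrinsic cylinder `G_ρ^λ(z₀)`. -/
def Gpq {n : ℕ} (a : Pt n → ℝ) (p q : ℝ) (z₀ : Pt n) (lam ρ : ℝ) : Set (Pt n) :=
  Qrs z₀ ρ (lam ^ 2 / Hf a p q z₀ lam * ρ ^ 2)

/-- The space-time domain `Ω_T = Ω × (0,T)`. -/
def cyl {n : ℕ} (Ω : Set (Spc n)) (T : ℝ) : Set (Pt n) := Ω ×ˢ Set.Ioo 0 T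

/-- Spatial partial derivative `∂_{x_j} ψ` of a scalar test function. -/
def dxj {n : ℕ} (ψ : Pt n → ℝ) (j : Fin n) (z : Pt n) : ℝ :=
  fderiv ℝ ψ z (EuclideanSpace.single j 1, 0)

/-- Time derivative `∂_t φ` of a vector-valued test function. -/
def dtd {n N : ℕ} (φ : Pt n → Vec N) (z : Pt n) : Vec N :=
  fderiv ℝ φ z ((0 : Spc n), (1 : ℝ))

/-- Spatial gradient `∇φ` of a vector-valued test function, as a matrix. -/
def gradm {n N : ℕ} (φ : Pt n → Vec N) (z : Pt n) : Mat N n :=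
  fun i j => fderiv ℝ (fun w => φ w i) z (EuclideanSpace.single j 1, 0)

/-- The structural setting of the parabolic double-phase problem:
`data = (n, N, p, q, α, L₁, L₂, [a]_α)` together with the bounded domain `Ω`,
time `T`, the coefficient `a`, the vector field `𝒜` and the source `F`. -/
structure Setting (n N : ℕ) (p q α L₁ L₂ aH : ℝ) where
  Ω : Set (Spc n)
  T : ℝ
  a : Pt n → ℝ
  A : Pt n → Mat N n → Mat N n
  F : Pt n → Mat N n
  hn : 2 ≤ n
  hN : 1 ≤ N
  hΩo : IsOpen Ω
  hΩb : Bornology.IsBounded Ω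
  hΩne : Ω.Nonempty
  hT : 0 < T
  hα : α ∈ Set.Ioc (0 : ℝ) 1
  hp2 : 2 < p
  hpq : p < q
  hqub : q < p + 2 * α / ((n : ℝ) + 2)
  hL₁ : 0 < L₁
  hL₁₂ : L₁ ≤ L₂
  haH : 0 < aH
  ha0 : ∀ z, 0 ≤ a z
  haM : Measurable a
  haB : BddAbove (Set.range a)
  haHol : ∀ x ∈ Ω, ∀ y ∈ Ω, ∀ t ∈ Set.Ioo (0 : ℝ) T, ∀ s ∈ Set.Ioo (0 : ℝ) T,
    |a (x, t) - a (y, s)| ≤ aH * max (‖x - y‖ ^ α) (|t - s| ^ (α / 2))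
  hAM : Measurable (Function.uncurry A)
  hAcoer : ∀ᵐ z ∂(volume.restrict (cyl Ω T)), ∀ ξ : Mat N n,
    L₁ * (mnorm ξ ^ p + a z * mnorm ξ ^ q) ≤ mdot (A z ξ) ξ
  hAgrow : ∀ᵐ z ∂(volume.restrict (cyl Ω T)), ∀ ξ : Mat N n,
    mnorm (A z ξ) ≤ L₂ * (mnorm ξ ^ (p - 1) + a z * mnorm ξ ^ (q - 1))
  hFM : Measurable F
  hFint : IntegrableOn (fun z => Hf a p q z (mnorm (F z))) (cyl Ω T)

variable {n N : ℕ} {p q α L₁ L₂ aH : ℝ}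

/-- The right-hand side field `|F|^{p−2}F + a|F|^{q−2}F`. -/
def rhsF (S : Setting n N p q α L₁ L₂ aH) (z : Pt n) : Mat N n :=
  fun i j => mnorm (S.F z) ^ (p - 2) * S.F z i j + S.a z * mnorm (S.F z) ^ (q - 2) * S.F z i j

/-- Very weak solution with integrability deficit `δ`: `u ∈ L¹(0,T;W^{1,1})` with
weak spatial gradient `Du`, `H(·,|Du|)^δ` integrable, satisfying the weak formulation. -/
structure VeryWeakSolution (S : Setting n N p q α L₁ L₂ aH)
    (u : Pt n → Vec N) (Du : Pt n → Mat N n) (δ : ℝ) : Prop where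
  hδ : δ ∈ Set.Ioo (0 : ℝ) 1
  huM : Measurable u
  hDuM : Measurable Du
  huL1 : IntegrableOn (fun z => vnorm (u z)) (cyl S.Ω S.T)
  hDuL1 : IntegrableOn (fun z => mnorm (Du z)) (cyl S.Ω S.T)
  hgrad : ∀ (i : Fin N) (j : Fin n) (ψ : Pt n → ℝ),
    ContDiff ℝ (⊤ : ℕ∞) ψ → HasCompactSupport ψ → tsupport ψ ⊆ cyl S.Ω S.T →
    ∫ z in cyl S.Ω S.T, u z i * dxj ψ j z = - ∫ z in cyl S.Ω S.T, Du z i j * ψ z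
  henergy : IntegrableOn (fun z => Hf S.a p q z (mnorm (Du z)) ^ δ) (cyl S.Ω S.T)
  hweak : ∀ φ : Pt n → Vec N,
    ContDiff ℝ (⊤ : ℕ∞) φ → HasCompactSupport φ → tsupport φ ⊆ cyl S.Ω S.T →
    ∫ z in cyl S.Ω S.T, (-(vdot (u z) (dtd φ z)) + mdot (S.A z (Du z)) (gradm φ z))
      = ∫ z in cyl S.Ω S.T, mdot (rhsF S z) (gradm φ z)

/-- `H(z,|∇u|)`. -/
def HDu (S : Setting n N p q α L₁ L₂ aH) (Du : Pt n → Mat N n) (z : Pt n) : ℝ :=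
  Hf S.a p q z (mnorm (Du z))

/-- `H(z,|F|)`. -/
def HFf (S : Setting n N p q α L₁ L₂ aH) (z : Pt n) : ℝ :=
  Hf S.a p q z (mnorm (S.F z))

/-- Componentwise integral average `(u)_E` of a vector-valued function. -/
def vavg {n N : ℕ} (u : Pt n → Vec N) (E : Set (Pt n)) : Vec N := fun i => ⨍ z in E, u z i

/-- The `p`-intrinsic hypotheses \eqref{eq_pcase}-\eqref{eq_rho_decay}. -/
structure PHyp (S : Setting n N p q α L₁ L₂ aH) (Du : Pt n → Mat N n)
    (z₀ : Pt n) (π ρ δ : ℝ) : Prop where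
  hz₀ : z₀ ∈ cyl S.Ω S.T
  hπ : 1 < π
  hρ : ρ ∈ Set.Ioo (0 : ℝ) 1
  hcase : S.a z₀ * π ^ q ≤ π ^ p
  hsub : Qp p z₀ π (16 * ρ) ⊆ cyl S.Ω S.T
  hlow : π ^ (δ * p) ≤ ⨍ z in Qp p z₀ π ρ, (HDu S Du z + HFf S z) ^ δ
  hup : (⨍ z in Qp p z₀ π (16 * ρ), (HDu S Du z + HFf S z) ^ δ) ≤ π ^ (δ * p)
  hdecay : ρ ^ α ≤ π ^ (p - q)

/-- The `(p,q)`-intrinsic hypotheses \eqref{eq_pqcase}-\eqref{eq_pq4}. -/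
structure PQHyp (S : Setting n N p q α L₁ L₂ aH) (Du : Pt n → Mat N n)
    (z₀ : Pt n) (π ρ δ : ℝ) : Prop where
  hz₀ : z₀ ∈ cyl S.Ω S.T
  hπ : 1 < π
  hρ : ρ ∈ Set.Ioo (0 : ℝ) 1
  hcase : π ^ p < S.a z₀ * π ^ q
  hsub : Gpq S.a p q z₀ π (16 * ρ) ⊆ cyl S.Ω S.T
  hcomp : ∀ z ∈ Qc z₀ (10 * ρ), S.a z₀ / 2 ≤ S.a z ∧ S.a z ≤ 2 * S.a z₀
  hlow : Hf S.a p q z₀ π ^ δ ≤ ⨍ z in Gpq S.a p q z₀ π ρ, (HDu S Du z + HFf S z) ^ δ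
  hup : (⨍ z in Gpq S.a p q z₀ π (16 * ρ), (HDu S Du z + HFf S z) ^ δ) ≤ Hf S.a p q z₀ π ^ δ

/-- Strong maximal function over parabolic cylinders. -/
def strongMax {n : ℕ} (f : Pt n → ℝ) (z : Pt n) : ℝ :=
  sSup {m : ℝ | ∃ (w : Pt n) (r s : ℝ), 0 < r ∧ 0 < s ∧ z ∈ Qrs w r s ∧
    m = ⨍ y in Qrs w r s, |f y|}

/-- The function `g = (|∇u| + |u−u₀|/ρ + |F|) χ_{𝒬₂}`. -/
def gW (S : Setting n N p q α L₁ L₂ aH) (u : Pt n → Vec N) (Du : Pt n → Mat N n)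
    (Q2 : Set (Pt n)) (ρ : ℝ) (z : Pt n) : ℝ :=
  Q2.indicator (fun w => mnorm (Du w) + vnorm (u w - vavg u Q2) / ρ + mnorm (S.F w)) z

/-- Hölder extension of `a` to all of ℝ^{n+1}. -/
def aExt (S : Setting n N p q α L₁ L₂ aH) (Q2 : Set (Pt n)) (z : Pt n) : ℝ :=
  sInf {v : ℝ | ∃ w ∈ cyl S.Ω S.T,
    v = Q2.indicator S.a w + aH * (‖z.1 - w.1‖ ^ α + |z.2 - w.2| ^ (α / 2))}

/-- Hölder extension of `a` truncated between `inf_{𝒬₂} a` and `sup_{𝒬₂} a`. -/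
def aStar (S : Setting n N p q α L₁ L₂ aH) (Q2 : Set (Pt n)) (z : Pt n) : ℝ :=
  max (min (aExt S Q2 z) (sSup (S.a '' Q2))) (sInf (S.a '' Q2))

/-- The maximal weight `Υ(z) = (M(g^{q−1} + (a g^q)^{(q−1)/p})(z))^{p/(q−1)}`. -/
def Ups (S : Setting n N p q α L₁ L₂ aH) (u : Pt n → Vec N) (Du : Pt n → Mat N n)
    (Q2 : Set (Pt n)) (ρ : ℝ) (z : Pt n) : ℝ :=
  strongMax (fun w => gW S u Du Q2 ρ w ^ (q - 1)
      + (aStar S Q2 w * gW S u Du Q2 ρ w ^ q) ^ ((q - 1) / p)) z ^ (p / (q - 1))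

/-- `Υ̂(z) = max{Υ(z), θΠ}`. -/
def UpsHat (S : Setting n N p q α L₁ L₂ aH) (u : Pt n → Vec N) (Du : Pt n → Mat N n)
    (Q2 : Set (Pt n)) (ρ θ Pi' : ℝ) (z : Pt n) : ℝ :=
  max (Ups S u Du Q2 ρ z) (θ * Pi')

/-- `‖a‖_{L^∞(Ω_T)}`. -/
def supA (S : Setting n N p q α L₁ L₂ aH) : ℝ := sSup (S.a '' cyl S.Ω S.T)

/-- The constant `K = ((1+‖a‖_∞)/|B₁| ∬ Υ^μ)^{α/(n+2)}`. -/
def Kconst (S : Setting n N p q α L₁ L₂ aH) (u : Pt n → Vec N) (Du : Pt n → Mat N n)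
    (Q2 : Set (Pt n)) (ρ μ : ℝ) : ℝ :=
  (((1 + supA S) / (volume (Metric.ball (0 : Spc n) 1)).toReal)
      * ∫ z, Ups S u Du Q2 ρ z ^ μ) ^ (α / ((n : ℝ) + 2))

/-- Conditions \eqref{def_mu}-\eqref{def_mu_2} on `μ`. -/
def muCond (n : ℕ) (p q α μ : ℝ) : Prop :=
  max (1 - 2 / q + ((n : ℝ) + 2) * (q - p) / (q * α)) ((q - 1) / p) < μ ∧ μ < 1 ∧
    (1 / μ - 1) * (2 * (n : ℝ)) / (((n : ℝ) + 2) * q) + (n : ℝ) / ((n : ℝ) + 2) ≤ p / q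

/-- Condition \eqref{def_mfs} on `γ`. -/
def gammaCond (n : ℕ) (p q α μ γ : ℝ) : Prop :=
  0 < γ ∧ γ < 1 ∧ -(2 * α) / ((n : ℝ) + 2) + α * q * (1 - μ) / ((n : ℝ) + 2) < p - q - γ

/-- Condition \eqref{def_mfc} on the structural constant `c₀`. -/
def c0Cond (S : Setting n N p q α L₁ L₂ aH) (u : Pt n → Vec N) (Du : Pt n → Mat N n)
    (Q2 : Set (Pt n)) (ρ θ μ γ c₀ : ℝ) : Prop :=
  1 < c₀ ∧
    Kconst S u Du Q2 ρ μ * (θ * c₀ / (2 * (1 + supA S))) ^ (-(γ / p))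
      ≤ 1 / (800 * (1 + aH))

/-- The cylinder `𝒬` of \eqref{def_Qi}: `p`-intrinsic or `(p,q)`-intrinsic by phase. -/
def QorG (S : Setting n N p q α L₁ L₂ aH) (z₀ : Pt n) (π r : ℝ) : Set (Pt n) :=
  if S.a z₀ * π ^ q ≤ π ^ p then Qp p z₀ π r else Gpq S.a p q z₀ π r

/-- Half-length `σ` of the time interval of `𝒬`. -/
def sigmaOf (S : Setting n N p q α L₁ L₂ aH) (z₀ : Pt n) (π r : ℝ) : ℝ :=
  if S.a z₀ * π ^ q ≤ π ^ p then π ^ (2 - p) * r ^ 2 else π ^ 2 / Hf S.a p q z₀ π * r ^ 2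

/-- `Π_{z₀}` of \eqref{def_Pizo}. -/
def PiZ (S : Setting n N p q α L₁ L₂ aH) (z₀ : Pt n) (π : ℝ) : ℝ :=
  if S.a z₀ * π ^ q ≤ π ^ p then Hf S.a p q z₀ π else π ^ p

/-- Upper level set `Ψ(Λ)` of `H(z,|∇u|)`. -/
def PsiSet (S : Setting n N p q α L₁ L₂ aH) (Du : Pt n → Mat N n) (Λ : ℝ) : Set (Pt n) :=
  {z ∈ cyl S.Ω S.T | Λ < HDu S Du z}

/-- Upper level set `Φ(Λ)` of `H(z,|F|)`. -/
def PhiSet (S : Setting n N p q α L₁ L₂ aH) (Λ : ℝ) : Set (Pt n) :=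
  {z ∈ cyl S.Ω S.T | Λ < HFf S z}

/-- `Π > c₀` for the structural constant `c₀` of the paper. -/
def PiBig (S : Setting n N p q α L₁ L₂ aH) (u : Pt n → Vec N) (Du : Pt n → Mat N n)
    (z₀ : Pt n) (π ρ : ℝ) : Prop :=
  ∃ θ μ γ c₀ : ℝ, θ ∈ Set.Ioo (0 : ℝ) 1 ∧ muCond n p q α μ ∧ gammaCond n p q α μ γ ∧
    c0Cond S u Du (QorG S z₀ π (4 * ρ)) ρ θ μ γ c₀ ∧ c₀ < Hf S.a p q z₀ π

/-- `u ∈ C(0,T; L²(Ω,ℝᴺ))`. -/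
def ContL2 (S : Setting n N p q α L₁ L₂ aH) (u : Pt n → Vec N) : Prop :=
  (∀ t ∈ Set.Ioo (0 : ℝ) S.T, IntegrableOn (fun x => vnorm (u (x, t)) ^ 2) S.Ω) ∧
  ∀ t₁ ∈ Set.Ioo (0 : ℝ) S.T, ∀ ε > (0 : ℝ), ∃ η > (0 : ℝ), ∀ t₂ ∈ Set.Ioo (0 : ℝ) S.T,
    |t₂ - t₁| < η → ∫ x in S.Ω, vnorm (u (x, t₂) - u (x, t₁)) ^ 2 < ε

/-- The Vitali covering cylinder `U(w)`: `Q^{π_w}_{2ρ_w}(w)` or `G^{π_w}_{2ρ_w}(w)` by phase. -/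
def Uw (S : Setting n N p q α L₁ L₂ aH) (w : Pt n) (πw ρw : ℝ) : Set (Pt n) :=
  if S.a w * πw ^ q ≤ πw ^ p then Qp p w πw (2 * ρw) else Gpq S.a p q w πw (2 * ρw)

end DoublePhase

open DoublePhase
lemma aux_mnorm_meas {n N : ℕ} : Measurable (fun A : Mat N n => mnorm A) := by
  unfold mnorm mdot
  fun_prop

lemma aux_mnorm_nonneg {n N : ℕ} (A : Mat N n) : 0 ≤ mnorm A := Real.sqrt_nonneg _

lemma aux_pow_le {x r t : ℝ} (hx : 0 ≤ x) (hr : 0 ≤ r) (hrt : r ≤ t) : x ^ r ≤ 1 + x ^ t := by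
  rcases le_total x 1 with h | h
  · have := Real.rpow_le_one hx h hr
    have := Real.rpow_nonneg hx t
    linarith
  · have := Real.rpow_le_rpow_of_exponent_le h hrt
    linarith

/-- Powers of a function with integrable higher power are integrable. -/
lemma aux_int {X : Type*} [MeasurableSpace X] {μ : Measure X} [IsFiniteMeasure μ]
    {g h : X → ℝ} (hg : Measurable g) (hg0 : ∀ z, 0 ≤ g z) (hh : Integrable h μ) {r t : ℝ}
    (hr : 0 ≤ r) (hrt : r ≤ t) (hle : ∀ z, g z ^ t ≤ h z) :
    Integrable (fun z => g z ^ r) μ := by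
  refine Integrable.mono' ((integrable_const (1 : ℝ)).add hh)
    (hg.pow_const r).aestronglyMeasurable (Eventually.of_forall fun z => ?_)
  rw [Real.norm_of_nonneg (Real.rpow_nonneg (hg0 z) r)]
  have h1 := aux_pow_le (hg0 z) hr hrt
  have h2 := hle z
  simp only [Pi.add_apply]
  linarith

lemma aux_a {n N : ℕ} {p q α L₁ L₂ aH : ℝ} (S : Setting n N p q α L₁ L₂ aH)
    {Du : Pt n → Mat N n} {z₀ : Pt n} {π ρ δ : ℝ} (H : PHyp S Du z₀ π ρ δ)
    {s : ℝ} (hs : s ≤ 4 * ρ) {z : Pt n} (hz : z ∈ Qp p z₀ π s) (hzc : z ∈ cyl S.Ω S.T) :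
    S.a z ≤ (1 + 4 * |aH|) * π ^ (p - q) := by
  obtain ⟨hx, ht⟩ := hz
  obtain ⟨hα0, hα1⟩ := S.hα
  have hρ0 := H.hρ.1
  have hπ0 : 0 < π := lt_trans one_pos H.hπ
  have hx' : ‖z.1 - z₀.1‖ ≤ 4 * ρ := by
    rw [mem_ball, dist_eq_norm] at hx
    linarith
  have hs0 : 0 < s := lt_of_le_of_lt dist_nonneg (mem_ball.1 hx)
  have hpi : π ^ (2 - p) ≤ 1 := Real.rpow_le_one_of_one_le_of_nonpos H.hπ.le (by linarith [S.hp2])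
  have ht' : |z.2 - z₀.2| ≤ (4 * ρ) ^ 2 := by
    have h1 : |z.2 - z₀.2| ≤ π ^ (2 - p) * s ^ 2 := by
      rw [abs_le]
      constructor <;> linarith [ht.1, ht.2]
    have h2 : π ^ (2 - p) * s ^ 2 ≤ 1 * s ^ 2 := by gcongr
    have h3 : s ^ 2 ≤ (4 * ρ) ^ 2 := by gcongr
    linarith
  have h4 : (4 * ρ) ^ α ≤ 4 * ρ ^ α := by
    rw [Real.mul_rpow (by norm_num) hρ0.le]
    have : (4 : ℝ) ^ α ≤ 4 ^ (1 : ℝ) := Real.rpow_le_rpow_of_exponent_le (by norm_num) hα1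
    rw [Real.rpow_one] at this
    gcongr
  have hm : max (‖z.1 - z₀.1‖ ^ α) (|z.2 - z₀.2| ^ (α / 2)) ≤ 4 * π ^ (p - q) := by
    refine le_trans (max_le ?_ ?_) (h4.trans (by linarith [H.hdecay]))
    · exact Real.rpow_le_rpow (norm_nonneg _) hx' hα0.le
    · refine (Real.rpow_le_rpow (abs_nonneg _) ht' (by linarith)).trans (le_of_eq ?_)
      rw [← Real.rpow_natCast, ← Real.rpow_mul (by linarith)]
      congr 1
      push_cast
      ring
  have hol := S.haHol z.1 hzc.1 z₀.1 H.hz₀.1 z.2 hzc.2 z₀.2 H.hz₀.2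
  have hol' : S.a z - S.a z₀ ≤ aH * (4 * π ^ (p - q)) :=
    ((le_abs_self _).trans hol).trans (mul_le_mul_of_nonneg_left hm S.haH.le)
  have ha0 : S.a z₀ ≤ π ^ (p - q) := by
    rw [Real.rpow_sub hπ0, le_div_iff₀ (Real.rpow_pos_of_pos hπ0 _)]
    exact H.hcase
  rw [abs_of_pos S.haH]
  linarith

/-- Lemma 4.1: estimate for the lower-order averages in the `p`-intrinsic case. -/
theorem p_intrinsic_lower_order (n N : ℕ) (p q α L₁ L₂ aH : ℝ) :
    ∃ c : ℝ, 0 < c ∧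
      ∀ (S : Setting n N p q α L₁ L₂ aH) (u : Pt n → Vec N) (Du : Pt n → Mat N n) (δ : ℝ),
        VeryWeakSolution S u Du δ →
        ∀ (z₀ : Pt n) (π ρ : ℝ), PHyp S Du z₀ π ρ δ →
        ∀ θ ∈ Set.Ioc ((q - 1) / p) δ, ∀ s ∈ Set.Icc (2 * ρ) (4 * ρ),
          (⨍ z in Qp p z₀ π s,
              (mnorm (Du z) ^ (p - 1) + S.a z * mnorm (Du z) ^ (q - 1)
                + mnorm (S.F z) ^ (p - 1) + S.a z * mnorm (S.F z) ^ (q - 1)))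
            ≤ c * (⨍ z in Qp p z₀ π s, (mnorm (Du z) + mnorm (S.F z)) ^ (p - 1))
              + c * π ^ (-1 + p / q) * (⨍ z in Qp p z₀ π s,
                  S.a z ^ ((q - 1) / q) * (mnorm (Du z) ^ (q - 1) + mnorm (S.F z) ^ (q - 1)))
              + c * (⨍ z in Qp p z₀ π s,
                  (mnorm (Du z) + mnorm (S.F z)) ^ (θ * p)) ^ ((p - 1) / (θ * p)) := by
  refine ⟨2 + (1 + 4 * |aH|) ^ (1 / q), by positivity, ?_⟩
  intro S u Du δ hu z₀ π ρ H θ hθ s hs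
  set C : ℝ := (1 + 4 * |aH|) ^ (1 / q) with hC
  have hC0 : 0 ≤ C := by positivity
  have hp2 := S.hp2
  have hpq := S.hpq
  have hπ0 : 0 < π := lt_trans one_pos H.hπ
  have hρ0 := H.hρ.1
  have hq0 : 0 < q := by linarith
  have hp0 : 0 < p := by linarith
  have hδ0 := hu.hδ.1
  have hδ1 := hu.hδ.2
  have hqδ : q - 1 ≤ p * δ := by
    have h1 : (q - 1) / p < δ := lt_of_lt_of_le hθ.1 hθ.2
    rw [div_lt_iff₀ hp0] at h1
    linarith
  have hqp : q - 1 ≤ p := by nlinarith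
  have hsub : Qp p z₀ π s ⊆ cyl S.Ω S.T := by
    refine Subset.trans ?_ H.hsub
    have h1 : s ≤ 16 * ρ := by linarith [hs.2]
    have h0 : 0 ≤ s := by linarith [hs.1]
    have h2 : π ^ (2 - p) * s ^ 2 ≤ π ^ (2 - p) * (16 * ρ) ^ 2 := by gcongr
    exact prod_mono (ball_subset_ball h1) (Ioo_subset_Ioo (by linarith) (by linarith))
  have hfin : volume (cyl S.Ω S.T) < ∞ := by
    have : Bornology.IsBounded (cyl S.Ω S.T) := S.hΩb.prod (isBounded_Ioo 0 S.T)
    exact this.measure_lt_top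
  haveI : IsFiniteMeasure (volume.restrict (cyl S.Ω S.T)) :=
    ⟨by rw [Measure.restrict_apply_univ]; exact hfin⟩
  have hQm : MeasurableSet (Qp p z₀ π s) := measurableSet_ball.prod measurableSet_Ioo
  have hgM : Measurable (fun z => mnorm (Du z)) := aux_mnorm_meas.comp hu.hDuM
  have hfM : Measurable (fun z => mnorm (S.F z)) := aux_mnorm_meas.comp S.hFM
  have hg0 : ∀ z, 0 ≤ mnorm (Du z) := fun z => aux_mnorm_nonneg _
  have hf0 : ∀ z, 0 ≤ mnorm (S.F z) := fun z => aux_mnorm_nonneg _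
  have hgi : ∀ r, 0 ≤ r → r ≤ q - 1 →
      IntegrableOn (fun z => mnorm (Du z) ^ r) (Qp p z₀ π s) := by
    intro r hr hrq
    refine IntegrableOn.mono_set ?_ hsub
    refine aux_int hgM hg0 hu.henergy hr (hrq.trans hqδ) fun z => ?_
    rw [Real.rpow_mul (hg0 z)]
    refine Real.rpow_le_rpow (Real.rpow_nonneg (hg0 z) _) ?_ hδ0.le
    have := mul_nonneg (S.ha0 z) (Real.rpow_nonneg (hg0 z) q)
    unfold Hf
    linarith
  have hfi : ∀ r, 0 ≤ r → r ≤ q - 1 →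
      IntegrableOn (fun z => mnorm (S.F z) ^ r) (Qp p z₀ π s) := by
    intro r hr hrq
    refine IntegrableOn.mono_set ?_ hsub
    refine aux_int hfM hf0 S.hFint hr (hrq.trans hqp) fun z => ?_
    have := mul_nonneg (S.ha0 z) (Real.rpow_nonneg (hf0 z) q)
    unfold Hf
    linarith
  obtain ⟨M, hM⟩ := S.haB
  have haM : ∀ z, S.a z ≤ M := fun z => hM (mem_range_self z)
  have hmulb : ∀ (b g : Pt n → ℝ) (B : ℝ), Measurable b → (∀ z, 0 ≤ b z) → (∀ z, b z ≤ B) →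
      IntegrableOn g (Qp p z₀ π s) → IntegrableOn (fun z => b z * g z) (Qp p z₀ π s) := by
    intro b g B hb hb0 hbB hg
    refine Integrable.bdd_mul (c := B) hg hb.aestronglyMeasurable (Eventually.of_forall fun z => ?_)
    rw [Real.norm_of_nonneg (hb0 z)]
    exact hbB z
  have hp1 : 0 ≤ p - 1 := by linarith
  have hq1 : 0 ≤ q - 1 := by linarith
  have hpq1 : p - 1 ≤ q - 1 := by linarith
  have hLi : IntegrableOn (fun z => mnorm (Du z) ^ (p - 1) + S.a z * mnorm (Du z) ^ (q - 1)
      + mnorm (S.F z) ^ (p - 1) + S.a z * mnorm (S.F z) ^ (q - 1)) (Qp p z₀ π s) :=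
    (((hgi _ hp1 hpq1).add (hmulb _ _ M S.haM S.ha0 haM (hgi _ hq1 le_rfl))).add
      (hfi _ hp1 hpq1)).add (hmulb _ _ M S.haM S.ha0 haM (hfi _ hq1 le_rfl))
  have hexp : 0 ≤ (q - 1) / q := div_nonneg hq1 hq0.le
  have hR2 : IntegrableOn (fun z => S.a z ^ ((q - 1) / q) *
      (mnorm (Du z) ^ (q - 1) + mnorm (S.F z) ^ (q - 1))) (Qp p z₀ π s) :=
    hmulb (fun z => S.a z ^ ((q - 1) / q)) _ (M ^ ((q - 1) / q)) (S.haM.pow_const _)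
      (fun z => Real.rpow_nonneg (S.ha0 z) _)
      (fun z => Real.rpow_le_rpow (S.ha0 z) (haM z) hexp)
      ((hgi _ hq1 le_rfl).add (hfi _ hq1 le_rfl))
  have hR1 : IntegrableOn (fun z => (mnorm (Du z) + mnorm (S.F z)) ^ (p - 1)) (Qp p z₀ π s) := by
    refine Integrable.mono' (((hgi _ hp1 hpq1).add (hfi _ hp1 hpq1)).const_mul (2 ^ (p - 1)))
      ((hgM.add hfM).pow_const _).aestronglyMeasurable (Eventually.of_forall fun z => ?_)
    rw [Real.norm_of_nonneg (Real.rpow_nonneg (add_nonneg (hg0 z) (hf0 z)) _)]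
    simp only [Pi.add_apply]
    have key : ∀ x y : ℝ, 0 ≤ x → 0 ≤ y → x ≤ y →
        (x + y) ^ (p - 1) ≤ 2 ^ (p - 1) * (x ^ (p - 1) + y ^ (p - 1)) := by
      intro x y hx hy hxy
      have h1 : (x + y) ^ (p - 1) ≤ (2 * y) ^ (p - 1) :=
        Real.rpow_le_rpow (add_nonneg hx hy) (by linarith) hp1
      rw [Real.mul_rpow (by norm_num) hy] at h1
      have h2 : 0 ≤ (2 : ℝ) ^ (p - 1) * x ^ (p - 1) := by positivity
      linarith
    rcases le_total (mnorm (Du z)) (mnorm (S.F z)) with h | h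
    · exact key _ _ (hg0 z) (hf0 z) h
    · rw [add_comm (mnorm (Du z)), add_comm (mnorm (Du z) ^ _)]
      exact key _ _ (hf0 z) (hg0 z) h
  have hpt : ∀ z ∈ Qp p z₀ π s, mnorm (Du z) ^ (p - 1) + S.a z * mnorm (Du z) ^ (q - 1)
      + mnorm (S.F z) ^ (p - 1) + S.a z * mnorm (S.F z) ^ (q - 1)
      ≤ (2 + C) * (mnorm (Du z) + mnorm (S.F z)) ^ (p - 1)
        + (2 + C) * π ^ (-1 + p / q) * (S.a z ^ ((q - 1) / q) *
      (mnorm (Du z) ^ (q - 1) + mnorm (S.F z) ^ (q - 1))) := by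
    intro z hz
    have ha := aux_a S H hs.2 hz (hsub hz)
    have ha1 : S.a z ^ (1 / q) ≤ C * π ^ (-1 + p / q) := by
      refine (Real.rpow_le_rpow (S.ha0 z) ha (by positivity)).trans (le_of_eq ?_)
      rw [Real.mul_rpow (by positivity) (by positivity), ← Real.rpow_mul hπ0.le]
      congr 2
      field_simp
      ring
    have ha2 : S.a z = S.a z ^ (1 / q) * S.a z ^ ((q - 1) / q) := by
      rw [← Real.rpow_add_of_nonneg (S.ha0 z) (by positivity) hexp]
      have : 1 / q + (q - 1) / q = 1 := by field_simp; ring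
      rw [this, Real.rpow_one]
    set X := mnorm (Du z) ^ (q - 1) + mnorm (S.F z) ^ (q - 1) with hX
    have hX0 : 0 ≤ X := add_nonneg (Real.rpow_nonneg (hg0 z) _) (Real.rpow_nonneg (hf0 z) _)
    set Y := S.a z ^ ((q - 1) / q) with hY
    have hY0 : 0 ≤ Y := Real.rpow_nonneg (S.ha0 z) _
    have hP0 : 0 ≤ π ^ (-1 + p / q) := Real.rpow_nonneg hπ0.le _
    have h1 : S.a z * X ≤ (2 + C) * π ^ (-1 + p / q) * (Y * X) := by
      rw [ha2, mul_assoc]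
      refine mul_le_mul_of_nonneg_right (ha1.trans ?_) (mul_nonneg hY0 hX0)
      exact mul_le_mul_of_nonneg_right (by linarith) hP0
    have h2 : mnorm (Du z) ^ (p - 1) ≤ (mnorm (Du z) + mnorm (S.F z)) ^ (p - 1) :=
      Real.rpow_le_rpow (hg0 z) (by linarith [hf0 z]) hp1
    have h3 : mnorm (S.F z) ^ (p - 1) ≤ (mnorm (Du z) + mnorm (S.F z)) ^ (p - 1) :=
      Real.rpow_le_rpow (hf0 z) (by linarith [hg0 z]) hp1
    have h4 : 0 ≤ C * (mnorm (Du z) + mnorm (S.F z)) ^ (p - 1) :=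
      mul_nonneg hC0 (Real.rpow_nonneg (add_nonneg (hg0 z) (hf0 z)) _)
    rw [hX, mul_add] at h1
    linarith
  have hint := setIntegral_mono_on hLi ((hR1.const_mul (2 + C)).add
    (hR2.const_mul ((2 + C) * π ^ (-1 + p / q)))) hQm hpt
  simp only [Pi.add_apply] at hint
  rw [integral_add (hR1.const_mul (2 + C)) (hR2.const_mul ((2 + C) * π ^ (-1 + p / q))),
    integral_const_mul, integral_const_mul] at hint
  have h3 : 0 ≤ (2 + C) * (⨍ z in Qp p z₀ π s,
      (mnorm (Du z) + mnorm (S.F z)) ^ (θ * p)) ^ ((p - 1) / (θ * p)) := by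
    refine mul_nonneg (by linarith) (Real.rpow_nonneg ?_ _)
    rw [setAverage_eq, smul_eq_mul]
    exact mul_nonneg (inv_nonneg.2 measureReal_nonneg) (integral_nonneg fun z =>
      Real.rpow_nonneg (add_nonneg (hg0 z) (hf0 z)) _)
  refine le_trans ?_ (le_add_of_nonneg_right h3)
  simp only [setAverage_eq, smul_eq_mul]
  have hv : 0 ≤ (volume.real (Qp p z₀ π s))⁻¹ := inv_nonneg.2 measureReal_nonneg
  refine (mul_le_mul_of_nonneg_left hint hv).trans (le_of_eq ?_)
  ring
end
end

section
/- Let u be a very weak solution with integrability deficit δ ∈ (0,1), and assume the p-intrinsic hypotheses. Then for every θ ∈ ((q−1)/p, δ] and every s ∈ [2ρ, 4ρ] there exists a constant c = c(data) such that ⨍_{Q^π_s(z₀)} |u − (u)_{Q^π_s(z₀)}|^{θp}/s^{θp} dz ≤ c ⨍_{Q^π_s(z₀)} (H(z,|∇u|) + H(z,|F|))^θ dz. -/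
open MeasureTheory Set Metric Filter
open scoped ENNReal NNReal Topology BigOperators Classical

noncomputable section

open DoublePhase

theorem jensen_prob {X : Type*} [MeasurableSpace X] (ν : Measure X) [IsProbabilityMeasure ν]
    {f : X → ℝ≥0∞} (hf : AEMeasurable f ν) {r : ℝ} (hr : 1 ≤ r) :
    (∫⁻ x, f x ∂ν) ^ r ≤ ∫⁻ x, f x ^ r ∂ν := by
  have h0 : 0 < r := by linarith
  have h := eLpNorm'_le_eLpNorm'_of_exponent_le (f := f) one_pos hr ν hf.aestronglyMeasurable
  simp only [eLpNorm', enorm_eq_self, ENNReal.rpow_one, div_one] at h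
  calc (∫⁻ x, f x ∂ν) ^ r ≤ ((∫⁻ x, f x ^ r ∂ν) ^ (1 / r)) ^ r := by gcongr
    _ = _ := by rw [← ENNReal.rpow_mul, one_div_mul_cancel h0.ne', ENNReal.rpow_one]

theorem lintegral_affine {n : ℕ} {F : Spc n → ℝ≥0∞} (hF : Measurable F) (a : Spc n) {h : ℝ}
    (hh : 1 / 2 ≤ h) : ∫⁻ y, F (a + h • y) ≤ 2 ^ n * ∫⁻ y, F y := by
  have h0 : 0 < h := by linarith
  have h1 : ∫⁻ y, F (a + h • y) = ∫⁻ y, F (a + y) ∂(Measure.map (fun y => h • y) volume) := by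
    rw [lintegral_map (by fun_prop) (by fun_prop)]
  rw [h1, Measure.map_addHaar_smul _ h0.ne', lintegral_smul_measure,
    lintegral_add_left_eq_self (fun y => F y) a, smul_eq_mul]
  gcongr
  have : (2 : ℝ≥0∞) ^ n = ENNReal.ofReal (2 ^ n) := by
    rw [ENNReal.ofReal_pow (by norm_num)]; simp
  rw [this]
  apply ENNReal.ofReal_le_ofReal
  rw [abs_of_pos (by positivity), ← inv_pow]
  simp only [finrank_euclideanSpace, Fintype.card_fin]
  have : h⁻¹ ≤ 2 := by rw [inv_le_comm₀ h0 (by norm_num)]; linarith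
  gcongr

theorem ball_poincare {n : ℕ} {w : Spc n → ℝ} (hw : ContDiff ℝ 1 w) (x₀ : Spc n) (R : ℝ) {r : ℝ}
    (hr : 1 ≤ r) :
    ∫⁻ x in ball x₀ R, ∫⁻ y in ball x₀ R, ‖w x - w y‖ₑ ^ r ≤
      ENNReal.ofReal (2 * R) ^ r * (2 ^ n * volume (ball x₀ R) *
        ∫⁻ x in ball x₀ R, ‖fderiv ℝ w x‖ₑ ^ r) := by
  have hr0 : 0 ≤ r := by linarith
  set B := ball x₀ R with hB
  have hBm : MeasurableSet B := measurableSet_ball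
  set F : Spc n → ℝ≥0∞ := B.indicator (fun x => ‖fderiv ℝ w x‖ₑ ^ r) with hFdef
  have hDc : Continuous (fderiv ℝ w) := hw.continuous_fderiv (by norm_num)
  have hFm : Measurable F := by
    apply Measurable.indicator _ hBm
    exact (hDc.enorm.measurable).pow_const r
  have key : ∀ x ∈ B, ∀ y ∈ B, ‖w x - w y‖ₑ ^ r ≤
      ENNReal.ofReal (2 * R) ^ r * ∫⁻ h in Icc (0:ℝ) 1, F (x + h • (y - x)) := by
    intro x hx y hy
    have h1 := enorm_sub_le_lintegral_deriv_of_contDiffOn_Icc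
      (f := fun h : ℝ => w (x + h • (y - x))) (a := 0) (b := 1)
      (ContDiff.contDiffOn (by fun_prop)) zero_le_one
    simp only [one_smul, zero_smul, add_zero, add_sub_cancel] at h1
    have h2 : ∀ h : ℝ, deriv (fun h : ℝ => w (x + h • (y - x))) h =
        fderiv ℝ w (x + h • (y - x)) (y - x) := by
      intro h
      have e1 : HasDerivAt (fun h : ℝ => x + h • (y - x)) (y - x) h := by
        simpa using ((hasDerivAt_id h).smul_const (y - x)).const_add x
      exact (((hw.differentiable (by norm_num) _).hasFDerivAt).comp_hasDerivAt h e1).deriv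
    have h3 : ‖y - x‖ₑ ≤ ENNReal.ofReal (2 * R) := by
      rw [← ofReal_norm]
      apply ENNReal.ofReal_le_ofReal
      rw [mem_ball, dist_eq_norm] at hx hy
      calc ‖y - x‖ = ‖(y - x₀) - (x - x₀)‖ := by congr 1; abel
        _ ≤ ‖y - x₀‖ + ‖x - x₀‖ := norm_sub_le _ _
        _ ≤ 2 * R := by linarith
    have hprob : IsProbabilityMeasure (volume.restrict (Icc (0:ℝ) 1)) := ⟨by simp⟩
    calc ‖w x - w y‖ₑ ^ r = ‖w y - w x‖ₑ ^ r := by rw [← enorm_neg, neg_sub]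
      _ ≤ (∫⁻ h in Icc (0:ℝ) 1, ‖fderiv ℝ w (x + h • (y - x))‖ₑ * ENNReal.ofReal (2 * R)) ^ r := by
          gcongr
          refine h1.trans (lintegral_mono fun h => ?_)
          rw [h2]
          exact (ContinuousLinearMap.le_opENorm _ _).trans (by gcongr)
      _ = ENNReal.ofReal (2 * R) ^ r *
          (∫⁻ h in Icc (0:ℝ) 1, ‖fderiv ℝ w (x + h • (y - x))‖ₑ) ^ r := by
          rw [lintegral_mul_const' _ _ ENNReal.ofReal_ne_top, ENNReal.mul_rpow_of_nonneg _ _ hr0,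
            mul_comm]
      _ ≤ ENNReal.ofReal (2 * R) ^ r *
          ∫⁻ h in Icc (0:ℝ) 1, ‖fderiv ℝ w (x + h • (y - x))‖ₑ ^ r := by
          gcongr
          apply jensen_prob _ _ hr
          apply Measurable.aemeasurable
          exact (Continuous.enorm (by fun_prop)).measurable
      _ = _ := by
          congr 1
          apply setLIntegral_congr_fun measurableSet_Icc
          intro h hh
          have : x + h • (y - x) ∈ B := (convex_ball x₀ R).add_smul_sub_mem hx hy hh
          simp [hFdef, this]
  have hBB : ∀ h ∈ Icc (0:ℝ) 1, ∫⁻ x in B, ∫⁻ y in B, F (x + h • (y - x)) ≤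
      2 ^ n * volume B * ∫⁻ x, F x := by
    intro h hh
    rcases le_total (1/2) h with h2 | h2
    · calc ∫⁻ x in B, ∫⁻ y in B, F (x + h • (y - x))
          ≤ ∫⁻ x in B, 2 ^ n * ∫⁻ y, F y := by
            apply lintegral_mono; intro x
            refine (setLIntegral_le_lintegral _ _).trans ?_
            refine le_trans (le_of_eq ?_) (lintegral_affine hFm (x - h • x) h2)
            congr 1; ext y; congr 1; rw [smul_sub]; abel
        _ = _ := by rw [setLIntegral_const]; ring
    · have hsw : ∫⁻ x in B, ∫⁻ y in B, F (x + h • (y - x)) =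
          ∫⁻ y in B, ∫⁻ x in B, F (x + h • (y - x)) := by
        apply lintegral_lintegral_swap
        exact (hFm.comp (by fun_prop)).aemeasurable
      rw [hsw]
      calc ∫⁻ y in B, ∫⁻ x in B, F (x + h • (y - x))
          ≤ ∫⁻ y in B, 2 ^ n * ∫⁻ y, F y := by
            apply lintegral_mono; intro y
            refine (setLIntegral_le_lintegral _ _).trans ?_
            refine le_trans (le_of_eq ?_) (lintegral_affine hFm (h • y) (h := 1 - h) (by linarith))
            congr 1; ext x; congr 1; rw [smul_sub, sub_smul, one_smul]; abel
        _ = _ := by rw [setLIntegral_const]; ring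
  have hFint : ∫⁻ x, F x = ∫⁻ x in B, ‖fderiv ℝ w x‖ₑ ^ r := by
    rw [hFdef, lintegral_indicator hBm]
  rw [← hFint]
  calc ∫⁻ x in B, ∫⁻ y in B, ‖w x - w y‖ₑ ^ r
      ≤ ∫⁻ x in B, ∫⁻ y in B, ENNReal.ofReal (2 * R) ^ r *
        ∫⁻ h in Icc (0:ℝ) 1, F (x + h • (y - x)) := by
        apply setLIntegral_mono' hBm; intro x hx
        apply setLIntegral_mono' hBm; intro y hy
        exact key x hx y hy
    _ = ENNReal.ofReal (2 * R) ^ r * ∫⁻ x in B, ∫⁻ y in B, 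
        ∫⁻ h in Icc (0:ℝ) 1, F (x + h • (y - x)) := by
        have : ENNReal.ofReal (2 * R) ^ r ≠ ⊤ := by
          exact ENNReal.rpow_ne_top_of_nonneg hr0 ENNReal.ofReal_ne_top
        rw [← lintegral_const_mul' _ _ this]
        congr 1; ext x
        rw [← lintegral_const_mul' _ _ this]
    _ = ENNReal.ofReal (2 * R) ^ r * ∫⁻ h in Icc (0:ℝ) 1, ∫⁻ x in B, ∫⁻ y in B, 
        F (x + h • (y - x)) := by
        congr 1
        have e1 : ∀ x, ∫⁻ y in B, ∫⁻ h in Icc (0:ℝ) 1, F (x + h • (y - x)) =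
            ∫⁻ h in Icc (0:ℝ) 1, ∫⁻ y in B, F (x + h • (y - x)) := by
          intro x
          apply lintegral_lintegral_swap
          exact (hFm.comp (by fun_prop)).aemeasurable
        simp_rw [e1]
        apply lintegral_lintegral_swap
        apply Measurable.aemeasurable
        exact Measurable.lintegral_prod_right' (f := fun (a : (Spc n × ℝ) × Spc n) =>
          F (a.1.1 + a.1.2 • (a.2 - a.1.1))) (hFm.comp (by fun_prop))
    _ ≤ ENNReal.ofReal (2 * R) ^ r * ∫⁻ h in Icc (0:ℝ) 1, 2 ^ n * volume B * ∫⁻ x, F x := by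
        refine mul_le_mul' le_rfl ?_
        exact setLIntegral_mono' measurableSet_Icc hBB
    _ = _ := by rw [setLIntegral_const]; simp

theorem exists_weight (n : ℕ) : ∃ M : ℝ, 0 < M ∧ ∀ (x₀ : Spc n) (R : ℝ), 0 < R →
    ∃ η : Spc n → ℝ, ContDiff ℝ 1 η ∧ HasCompactSupport η ∧ tsupport η ⊆ ball x₀ R ∧
      (∀ x, 0 ≤ η x) ∧ ∫ x, η x = 1 ∧
      (∀ x, ENNReal.ofReal (η x) ≤ ENNReal.ofReal M / volume (ball x₀ R)) ∧
      (∀ x, ‖fderiv ℝ η x‖ₑ ≤ ENNReal.ofReal M / (ENNReal.ofReal R * volume (ball x₀ R))) := by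
  let k : ContDiffBump (0 : Spc n) := ⟨1/4, 1/2, by norm_num, by norm_num⟩
  set f : Spc n → ℝ := k.normed volume with hf
  have hfs : ContDiff ℝ 1 f := k.contDiff_normed
  have hfc : HasCompactSupport f := k.hasCompactSupport_normed
  obtain ⟨C₁, hC₁⟩ := hfc.exists_bound_of_continuous hfs.continuous
  obtain ⟨C₂, hC₂⟩ := (hfc.fderiv (𝕜 := ℝ)).exists_bound_of_continuous
    (hfs.continuous_fderiv (by norm_num))
  set C := max C₁ C₂ with hC
  have hC0 : 0 ≤ C := (norm_nonneg _).trans ((hC₁ 0).trans (le_max_left _ _))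
  set ω := (volume (ball (0 : Spc n) 1)).toReal with hω
  have hω0 : 0 < ω := ENNReal.toReal_pos (measure_ball_pos _ _ one_pos).ne' measure_ball_lt_top.ne
  refine ⟨(C + 1) * ω, by positivity, fun x₀ R hR => ?_⟩
  have hvol : volume (ball x₀ R) = ENNReal.ofReal (R ^ n * ω) := by
    rw [Measure.addHaar_ball_of_pos _ _ hR, ENNReal.ofReal_mul (by positivity), hω,
      ENNReal.ofReal_toReal measure_ball_lt_top.ne]
    simp
  have hder : ∀ x, HasFDerivAt (fun x => (R ^ n)⁻¹ * f (R⁻¹ • (x - x₀)))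
      ((R ^ n)⁻¹ • (R⁻¹ • fderiv ℝ f (R⁻¹ • (x - x₀)))) x := by
    intro x
    have e1 : HasFDerivAt (fun x : Spc n => R⁻¹ • (x - x₀))
        (R⁻¹ • ContinuousLinearMap.id ℝ (Spc n)) x :=
      ((hasFDerivAt_id x).sub_const x₀).const_smul R⁻¹
    have e2 := ((hfs.differentiable (by norm_num) (R⁻¹ • (x - x₀))).hasFDerivAt.comp x e1)
    have e3 := e2.const_mul ((R ^ n)⁻¹)
    refine e3.congr_fderiv ?_
    ext y; simp
  have hts : tsupport (fun x => (R ^ n)⁻¹ * f (R⁻¹ • (x - x₀))) ⊆ closedBall x₀ (R / 2) := by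
    apply closure_minimal _ isClosed_closedBall
    intro x hx
    have hx' : f (R⁻¹ • (x - x₀)) ≠ 0 := by
      intro h; apply hx; simp [h]
    have : R⁻¹ • (x - x₀) ∈ Function.support f := hx'
    rw [hf, k.support_normed_eq] at this
    simp only [mem_ball, dist_zero_right, norm_smul, norm_inv, Real.norm_eq_abs, abs_of_pos hR,
      k] at this
    rw [mem_closedBall, dist_eq_norm]
    rw [inv_mul_lt_iff₀ hR] at this
    linarith
  refine ⟨fun x => (R ^ n)⁻¹ * f (R⁻¹ • (x - x₀)), ?_, ?_, ?_, ?_, ?_, ?_, ?_⟩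
  · fun_prop
  · exact HasCompactSupport.of_support_subset_isCompact (isCompact_closedBall x₀ (R/2))
      ((subset_tsupport _).trans hts)
  · exact hts.trans (closedBall_subset_ball (by linarith))
  · intro x
    have := k.nonneg_normed (μ := volume) (R⁻¹ • (x - x₀))
    positivity
  · rw [integral_const_mul, integral_sub_right_eq_self (fun x => f (R⁻¹ • x)) x₀,
      Measure.integral_comp_inv_smul, hf, k.integral_normed]
    simp [abs_of_pos hR, hR.ne']
  · intro x
    rw [hvol, ← ENNReal.ofReal_div_of_pos (by positivity)]
    apply ENNReal.ofReal_le_ofReal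
    have := (le_abs_self _).trans (hC₁ (R⁻¹ • (x - x₀)))
    have h3 : f (R⁻¹ • (x - x₀)) ≤ C + 1 := by linarith [le_max_left C₁ C₂]
    calc (R ^ n)⁻¹ * f (R⁻¹ • (x - x₀)) ≤ (R ^ n)⁻¹ * (C + 1) := by gcongr
      _ = _ := by field_simp
  · intro x
    rw [(hder x).fderiv, hvol, ← ENNReal.ofReal_mul hR.le,
      ← ENNReal.ofReal_div_of_pos (by positivity), ← ofReal_norm]
    apply ENNReal.ofReal_le_ofReal
    rw [norm_smul, norm_smul]
    have h3 : ‖fderiv ℝ f (R⁻¹ • (x - x₀))‖ ≤ C + 1 := by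
      linarith [le_max_right C₁ C₂, hC₂ (R⁻¹ • (x - x₀))]
    simp only [norm_inv, norm_pow, Real.norm_eq_abs, abs_of_pos hR]
    calc (R ^ n)⁻¹ * (R⁻¹ * ‖fderiv ℝ f (R⁻¹ • (x - x₀))‖) ≤ (R ^ n)⁻¹ * (R⁻¹ * (C + 1)) := by
          gcongr
      _ = _ := by field_simp

theorem weight_space {n : ℕ} {η : Spc n → ℝ} {B : Set (Spc n)} {M : ℝ≥0∞} (hc : Continuous η)
    (hs : HasCompactSupport η) (hsub : tsupport η ⊆ B) (hBm : MeasurableSet B) (h0 : ∀ x, 0 ≤ η x)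
    (h1 : ∫ x, η x = 1) (hM : ∀ x, ENNReal.ofReal (η x) ≤ M) (hMt : M ≠ ⊤) {V : Spc n → ℝ}
    (hV : Continuous V)
    {r : ℝ} (hr : 1 ≤ r) (x : Spc n) :
    ‖V x - ∫ ξ, η ξ * V ξ‖ₑ ^ r ≤ M * ∫⁻ ξ in B, ‖V x - V ξ‖ₑ ^ r := by
  have i1 : Integrable η := hc.integrable_of_hasCompactSupport hs
  have i2 : Integrable (fun ξ => η ξ * V ξ) :=
    (hc.mul hV).integrable_of_hasCompactSupport hs.mul_right
  have e1 : V x - ∫ ξ, η ξ * V ξ = ∫ ξ, η ξ * (V x - V ξ) := by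
    simp_rw [mul_sub]
    rw [integral_sub (i1.mul_const _) i2, integral_mul_const, h1, one_mul]
  have hd : Measurable (fun ξ => ENNReal.ofReal (η ξ)) := hc.measurable.ennreal_ofReal
  have hVm : ∀ x, Measurable (fun ξ => ‖V x - V ξ‖ₑ) := fun x =>
    (Continuous.enorm (by fun_prop)).measurable
  have hprob : IsProbabilityMeasure (volume.withDensity (fun ξ => ENNReal.ofReal (η ξ))) := by
    constructor
    rw [withDensity_apply _ MeasurableSet.univ, Measure.restrict_univ,
      ← ofReal_integral_eq_lintegral_ofReal i1 (Eventually.of_forall h0), h1, ENNReal.ofReal_one]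
  have hr0 : 0 < r := by linarith
  calc ‖V x - ∫ ξ, η ξ * V ξ‖ₑ ^ r
      ≤ (∫⁻ ξ, ‖V x - V ξ‖ₑ ∂(volume.withDensity (fun ξ => ENNReal.ofReal (η ξ)))) ^ r := by
        gcongr
        rw [e1, lintegral_withDensity_eq_lintegral_mul _ hd (hVm x)]
        refine (enorm_integral_le_lintegral_enorm _).trans (lintegral_mono fun ξ => ?_)
        simp only [Pi.mul_apply]
        rw [enorm_mul, Real.enorm_of_nonneg (h0 ξ)]
    _ ≤ ∫⁻ ξ, ‖V x - V ξ‖ₑ ^ r ∂(volume.withDensity (fun ξ => ENNReal.ofReal (η ξ))) :=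
        jensen_prob _ (hVm x).aemeasurable hr
    _ = ∫⁻ ξ, ENNReal.ofReal (η ξ) * ‖V x - V ξ‖ₑ ^ r := by
        rw [lintegral_withDensity_eq_lintegral_mul _ hd ((hVm x).pow_const r)]; rfl
    _ ≤ ∫⁻ ξ, B.indicator (fun ξ => M * ‖V x - V ξ‖ₑ ^ r) ξ := by
        apply lintegral_mono; intro ξ
        by_cases hξ : ξ ∈ B
        · simp only [indicator_of_mem hξ]; gcongr; exact hM ξ
        · have : η ξ = 0 := image_eq_zero_of_notMem_tsupport (fun h => hξ (hsub h))
          simp [this]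
    _ = _ := by rw [lintegral_indicator hBm, lintegral_const_mul' _ _ hMt]

theorem slice_x {n : ℕ} {V : Pt n → ℝ} (hV : ContDiff ℝ 1 V) (x : Spc n) (t : ℝ) (e : Spc n) :
    fderiv ℝ (fun y => V (y, t)) x e = fderiv ℝ V (x, t) (e, 0) := by
  have h1 : HasFDerivAt (fun y : Spc n => (y, t)) (ContinuousLinearMap.inl ℝ (Spc n) ℝ) x :=
    hasFDerivAt_prodMk_left x t
  have h2 := (hV.differentiable (by norm_num) (x, t)).hasFDerivAt.comp x h1
  have h3 : fderiv ℝ (fun y => V (y, t)) x = _ := h2.fderiv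
  rw [h3]; simp

theorem slice_t {n : ℕ} {V : Pt n → ℝ} (hV : ContDiff ℝ 1 V) (x : Spc n) (t : ℝ) :
    HasDerivAt (fun s => V (x, s)) (fderiv ℝ V (x, t) (0, 1)) t := by
  have h1 : HasDerivAt (fun s : ℝ => (x, s)) ((0 : Spc n), (1 : ℝ)) t :=
    (hasDerivAt_const t x).prodMk (hasDerivAt_id t)
  exact (hV.differentiable (by norm_num) (x, t)).hasFDerivAt.comp_hasDerivAt t h1

theorem weight_time {n : ℕ} {η : Spc n → ℝ} {B : Set (Spc n)} {M : ℝ≥0∞} (hc : ContDiff ℝ 1 η)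
    (hs : HasCompactSupport η) (hsub : tsupport η ⊆ B) (hBm : MeasurableSet B)
    (hM : ∀ x, ‖fderiv ℝ η x‖ₑ ≤ M) (hMt : M ≠ ⊤) {V : Pt n → ℝ} {G : Fin n → Pt n → ℝ}
    (hV : ContDiff ℝ 1 V) (hG : ∀ j, ContDiff ℝ 1 (G j)) {I : Set ℝ} (hI : OrdConnected I)
    (heq : ∀ x ∈ B, ∀ t ∈ I, fderiv ℝ V (x, t) (0, 1) =
      ∑ j, fderiv ℝ (G j) (x, t) (EuclideanSpace.single j 1, 0))
    {t₁ t₂ : ℝ} (ht₁ : t₁ ∈ I) (ht₂ : t₂ ∈ I) (h12 : t₁ ≤ t₂) :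
    ‖(∫ x, η x * V (x, t₂)) - ∫ x, η x * V (x, t₁)‖ₑ ≤
      M * ∫⁻ t in I, ∫⁻ x in B, ∑ j, ‖G j (x, t)‖ₑ := by
  have hcc := hc.continuous
  have hcV := hV.continuous
  have hDV : Continuous (fun z => fderiv ℝ V z ((0 : Spc n), (1 : ℝ))) :=
    (hV.continuous_fderiv (by norm_num)).clm_apply continuous_const
  have i2 : ∀ t, Integrable (fun x => η x * V (x, t)) := fun t =>
    (Continuous.mul hcc (by fun_prop)).integrable_of_hasCompactSupport hs.mul_right
  have e1 : (∫ x, η x * V (x, t₂)) - ∫ x, η x * V (x, t₁) =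
      ∫ x, ∫ t in Ioc t₁ t₂, η x * fderiv ℝ V (x, t) (0, 1) := by
    rw [← integral_sub (i2 _) (i2 _)]
    congr 1; ext x
    rw [integral_const_mul, ← mul_sub, ← intervalIntegral.integral_of_le h12,
      intervalIntegral.integral_eq_sub_of_hasDerivAt (f := fun s => V (x, s))
        (fun t _ => slice_t hV x t)]
    apply Continuous.intervalIntegrable
    exact hDV.comp (by fun_prop)
  have e2 : ∫ x, ∫ t in Ioc t₁ t₂, η x * fderiv ℝ V (x, t) (0, 1) =
      ∫ t in Ioc t₁ t₂, ∫ x, η x * fderiv ℝ V (x, t) (0, 1) := by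
    apply integral_integral_swap
    have hcont : Continuous (Function.uncurry fun (x : Spc n) (t : ℝ) =>
        η x * fderiv ℝ V (x, t) (0, 1)) := by
      apply Continuous.mul (by fun_prop)
      exact hDV
    have hcomp := hcont.continuousOn.integrableOn_compact (μ := volume)
      (hs.isCompact.prod (isCompact_Icc (a := t₁) (b := t₂)))
    have h3 : IntegrableOn (Function.uncurry fun (x : Spc n) (t : ℝ) =>
        η x * fderiv ℝ V (x, t) (0, 1)) (univ ×ˢ Ioc t₁ t₂) := by
      apply hcomp.of_forall_sdiff_eq_zero (MeasurableSet.univ.prod measurableSet_Ioc)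
      rintro ⟨x, t⟩ ⟨⟨-, h1⟩, h2⟩
      have : x ∉ tsupport η := fun h => h2 ⟨h, Ioc_subset_Icc_self h1⟩
      simp [Function.uncurry, image_eq_zero_of_notMem_tsupport this]
    rw [IntegrableOn, Measure.volume_eq_prod, ← Measure.prod_restrict, Measure.restrict_univ] at h3
    exact h3
  have hIs : Ioc t₁ t₂ ⊆ I := Ioc_subset_Icc_self.trans (hI.out ht₁ ht₂)
  have e3 : ∀ t ∈ I, ∫ x, η x * fderiv ℝ V (x, t) (0, 1) =
      - ∫ x, ∑ j, fderiv ℝ η x (EuclideanSpace.single j 1) * G j (x, t) := by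
    intro t ht
    have hGs : ∀ j, ContDiff ℝ 1 (fun x => G j (x, t)) := fun j => (hG j).comp (by fun_prop)
    have hDη : ∀ e : Spc n, Continuous (fun x => fderiv ℝ η x e) := fun e =>
      (hc.continuous_fderiv (by norm_num)).clm_apply continuous_const
    have hDG : ∀ j (e : Spc n), Continuous (fun x => fderiv ℝ (fun x => G j (x, t)) x e) :=
      fun j e => ((hGs j).continuous_fderiv (by norm_num)).clm_apply continuous_const
    have hDs : ∀ e : Spc n, HasCompactSupport (fun x => fderiv ℝ η x e) := fun e =>
      hs.fderiv_apply (𝕜 := ℝ) e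
    have j1 : ∀ j (e : Spc n), Integrable (fun x => fderiv ℝ η x e * G j (x, t)) := fun j e =>
      ((hDη e).mul (hGs j).continuous).integrable_of_hasCompactSupport (hDs e).mul_right
    have j2 : ∀ j (e : Spc n), Integrable (fun x => η x * fderiv ℝ (fun x => G j (x, t)) x e) :=
      fun j e => (hcc.mul (hDG j e)).integrable_of_hasCompactSupport hs.mul_right
    have j3 : ∀ j, Integrable (fun x => η x * G j (x, t)) := fun j =>
      (hcc.mul (hGs j).continuous).integrable_of_hasCompactSupport hs.mul_right
    have : ∀ x, η x * fderiv ℝ V (x, t) (0, 1) =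
        ∑ j, η x * fderiv ℝ (fun x => G j (x, t)) x (EuclideanSpace.single j 1) := by
      intro x
      by_cases hx : x ∈ tsupport η
      · rw [heq x (hsub hx) t ht, Finset.mul_sum]
        refine Finset.sum_congr rfl fun j _ => ?_
        rw [slice_x (hG j)]
      · simp [image_eq_zero_of_notMem_tsupport hx]
    simp_rw [this]
    rw [integral_finsetSum _ (fun j _ => j2 j _), integral_finsetSum _ (fun j _ => j1 j _),
      ← Finset.sum_neg_distrib]
    refine Finset.sum_congr rfl fun j _ => ?_
    exact integral_mul_fderiv_eq_neg_fderiv_mul_of_integrable (j1 j _) (j2 j _) (j3 j)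
      (fun x _ => hc.differentiable (by norm_num) x)
      (fun x _ => (hGs j).differentiable (by norm_num) x)
  have e4 : ∀ t ∈ I, ‖∫ x, η x * fderiv ℝ V (x, t) (0, 1)‖ₑ ≤
      M * ∫⁻ x in B, ∑ j, ‖G j (x, t)‖ₑ := by
    intro t ht
    rw [e3 t ht, enorm_neg, ← lintegral_const_mul' _ _ hMt, ← lintegral_indicator hBm]
    refine (enorm_integral_le_lintegral_enorm _).trans (lintegral_mono fun x => ?_)
    by_cases hx : x ∈ B
    · simp only [indicator_of_mem hx]
      rw [Finset.mul_sum]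
      refine (enorm_sum_le _ _).trans (Finset.sum_le_sum fun j _ => ?_)
      rw [enorm_mul]
      gcongr
      refine (ContinuousLinearMap.le_opENorm _ _).trans ?_
      have : ‖(EuclideanSpace.single j (1 : ℝ) : Spc n)‖ₑ = 1 := by
        rw [← ofReal_norm]; simp
      rw [this, mul_one]
      exact hM x
    · have hx' : x ∉ tsupport (fderiv ℝ η) := fun h => hx (hsub (tsupport_fderiv_subset ℝ h))
      have : fderiv ℝ η x = 0 := image_eq_zero_of_notMem_tsupport hx'
      simp [this]
  rw [e1, e2]
  calc _ ≤ ∫⁻ t in Ioc t₁ t₂, ‖∫ x, η x * fderiv ℝ V (x, t) (0, 1)‖ₑ :=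
        enorm_integral_le_lintegral_enorm _
    _ ≤ ∫⁻ t in Ioc t₁ t₂, M * ∫⁻ x in B, ∑ j, ‖G j (x, t)‖ₑ :=
        setLIntegral_mono' measurableSet_Ioc fun t ht => e4 t (hIs ht)
    _ ≤ ∫⁻ t in I, M * ∫⁻ x in B, ∑ j, ‖G j (x, t)‖ₑ := lintegral_mono_set hIs
    _ = _ := lintegral_const_mul' _ _ hMt

theorem clm_enorm_le {n : ℕ} (L : Spc n →L[ℝ] ℝ) :
    ‖L‖ₑ ≤ ∑ j, ‖L (EuclideanSpace.single j 1)‖ₑ := by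
  have h : ‖L‖ ≤ ∑ j, ‖L (EuclideanSpace.single j 1)‖ := by
    apply L.opNorm_le_bound (Finset.sum_nonneg fun j _ => norm_nonneg _)
    intro v
    have hv : v = ∑ j, v j • (EuclideanSpace.single j (1:ℝ) : Spc n) := by
      ext i
      simp [Finset.sum_apply, Pi.single_apply]
    calc ‖L v‖ = ‖∑ j, v j • L (EuclideanSpace.single j (1:ℝ))‖ := by
          conv_lhs => rw [hv]
          simp [map_sum]
      _ ≤ ∑ j, ‖v j • L (EuclideanSpace.single j (1:ℝ))‖ := norm_sum_le _ _
      _ ≤ ∑ j, ‖L (EuclideanSpace.single j 1)‖ * ‖v‖ := by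
          apply Finset.sum_le_sum; intro j _
          rw [norm_smul, mul_comm]
          gcongr
          exact PiLp.norm_apply_le v j
      _ = _ := by rw [Finset.sum_mul]
  rw [← ofReal_norm]
  refine (ENNReal.ofReal_le_ofReal h).trans (le_of_eq ?_)
  rw [ENNReal.ofReal_sum_of_nonneg (fun j _ => norm_nonneg _)]
  simp_rw [ofReal_norm]

theorem rpow_add3_le (a b c : ℝ≥0∞) {r : ℝ} (hr : 1 ≤ r) :
    (a + b + c) ^ r ≤ 3 ^ r * (a ^ r + b ^ r + c ^ r) := by
  have h := ENNReal.rpow_sum_le_const_mul_sum_rpow Finset.univ ![a, b, c] hr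
  simp only [Fin.sum_univ_three, Finset.card_univ, Fintype.card_fin, Matrix.cons_val_zero,
    Matrix.cons_val_one, Matrix.cons_val] at h
  refine h.trans ?_
  gcongr
  norm_num
  exact ENNReal.rpow_le_rpow_of_exponent_le (by norm_num) (by linarith)

theorem smooth_cyl (n : ℕ) : ∃ M : ℝ, 0 < M ∧ ∀ (z₀ : Pt n) (R τ : ℝ), 0 < R →
    ∀ (V : Pt n → ℝ) (G : Fin n → Pt n → ℝ), ContDiff ℝ 1 V → (∀ j, ContDiff ℝ 1 (G j)) →
    (∀ z ∈ Qrs z₀ R τ, fderiv ℝ V z (0, 1) =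
      ∑ j, fderiv ℝ (G j) z (EuclideanSpace.single j 1, 0)) → ∀ r : ℝ, 1 ≤ r →
    ∫⁻ z in Qrs z₀ R τ, ∫⁻ w in Qrs z₀ R τ, ‖V z - V w‖ₑ ^ r ≤
      3 ^ r * (2 * (ENNReal.ofReal M * 2 ^ n * ENNReal.ofReal (2 * R) ^ r) *
        volume (Qrs z₀ R τ) *
        (∫⁻ z in Qrs z₀ R τ, (∑ j, ‖fderiv ℝ V z (EuclideanSpace.single j 1, 0)‖ₑ) ^ r)
        + volume (Qrs z₀ R τ) ^ 2 * (ENNReal.ofReal M /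
          (ENNReal.ofReal R * volume (ball z₀.1 R)) * ∫⁻ z in Qrs z₀ R τ, ∑ j, ‖G j z‖ₑ) ^ r) := by
  obtain ⟨M, hM0, hM⟩ := exists_weight n
  refine ⟨M, hM0, fun z₀ R τ hR V G hV hG heq r hr => ?_⟩
  have hr0 : 0 ≤ r := by linarith
  obtain ⟨η, hηc, hηs, hηt, hη0, hη1, hηM, hηD⟩ := hM z₀.1 R hR
  set Q := Qrs z₀ R τ with hQ
  set B := ball z₀.1 R with hB
  set I := Ioo (z₀.2 - τ) (z₀.2 + τ) with hI
  have hBm : MeasurableSet B := measurableSet_ball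
  have hIm : MeasurableSet I := measurableSet_Ioo
  have hQm : MeasurableSet Q := hBm.prod hIm
  have hvB0 : volume B ≠ 0 := (measure_ball_pos _ _ hR).ne'
  have hvBt : volume B ≠ ⊤ := measure_ball_lt_top.ne
  have hQint : ∀ f : Pt n → ℝ≥0∞, Measurable f →
      ∫⁻ z in Q, f z = ∫⁻ t in I, ∫⁻ x in B, f (x, t) := by
    intro f hf
    rw [hQ, Qrs, Measure.volume_eq_prod, ← Measure.prod_restrict,
      lintegral_prod_symm _ hf.aemeasurable]
  have hcV := hV.continuous
  have hcη := hηc.continuous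
  set A : ℝ → ℝ := fun t => ∫ x, η x * V (x, t) with hA
  have hAm : Measurable A := by
    have : StronglyMeasurable (fun z : Pt n => η z.1 * V z) :=
      Continuous.stronglyMeasurable (by fun_prop)
    exact (StronglyMeasurable.integral_prod_left' this).measurable
  set M₁ := ENNReal.ofReal M / volume B with hM₁
  set M₂ := ENNReal.ofReal M / (ENNReal.ofReal R * volume B) with hM₂
  have hM₁t : M₁ ≠ ⊤ := ENNReal.div_ne_top ENNReal.ofReal_ne_top hvB0
  have hM₂t : M₂ ≠ ⊤ := ENNReal.div_ne_top ENNReal.ofReal_ne_top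
    (mul_ne_zero (by simpa using hR) hvB0)
  set a : Pt n → ℝ≥0∞ := fun z => ‖V z - A z.2‖ₑ ^ r with ha
  have ham : Measurable a :=
    ((hcV.measurable.sub (hAm.comp measurable_snd)).enorm).pow_const r
  set D : Pt n → ℝ≥0∞ := fun z =>
    (∑ j, ‖fderiv ℝ V z (EuclideanSpace.single j 1, 0)‖ₑ) ^ r with hD
  have hDm : Measurable D := by
    apply Measurable.pow_const
    apply Finset.measurable_sum; intro j _
    exact ((hV.continuous_fderiv (by norm_num)).clm_apply continuous_const).enorm.measurable
  set b := M₂ * ∫⁻ z in Q, ∑ j, ‖G j z‖ₑ with hb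
  have hgm : Measurable (fun z => ∑ j, ‖G j z‖ₑ) := by
    apply Finset.measurable_sum; intro j _
    exact (hG j).continuous.enorm.measurable
  have hspace : ∫⁻ z in Q, a z ≤ ENNReal.ofReal M * 2 ^ n * ENNReal.ofReal (2 * R) ^ r *
      ∫⁻ z in Q, D z := by
    rw [hQint a ham, hQint D hDm, ← lintegral_const_mul']
    swap
    · exact ENNReal.mul_ne_top (ENNReal.mul_ne_top ENNReal.ofReal_ne_top (by simp))
        (ENNReal.rpow_ne_top_of_nonneg hr0 ENNReal.ofReal_ne_top)
    apply lintegral_mono; intro t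
    have hVs : ContDiff ℝ 1 (fun x => V (x, t)) := hV.comp (by fun_prop)
    calc ∫⁻ x in B, a (x, t) ≤ ∫⁻ x in B, M₁ * ∫⁻ ξ in B, ‖V (x, t) - V (ξ, t)‖ₑ ^ r := by
          apply lintegral_mono; intro x
          exact weight_space hcη hηs hηt hBm hη0 hη1 hηM hM₁t hVs.continuous hr x
      _ = M₁ * ∫⁻ x in B, ∫⁻ ξ in B, ‖V (x, t) - V (ξ, t)‖ₑ ^ r := by
          rw [lintegral_const_mul' _ _ hM₁t]
      _ ≤ M₁ * (ENNReal.ofReal (2 * R) ^ r * (2 ^ n * volume B *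
            ∫⁻ x in B, ‖fderiv ℝ (fun x => V (x, t)) x‖ₑ ^ r)) := by
          gcongr
          exact ball_poincare hVs z₀.1 R hr
      _ ≤ M₁ * (ENNReal.ofReal (2 * R) ^ r * (2 ^ n * volume B * ∫⁻ x in B, D (x, t))) := by
          gcongr with x
          refine ENNReal.rpow_le_rpow ((clm_enorm_le _).trans (le_of_eq ?_)) hr0
          refine Finset.sum_congr rfl fun j _ => ?_
          rw [slice_x hV]
      _ = (M₁ * volume B) * 2 ^ n * ENNReal.ofReal (2 * R) ^ r * ∫⁻ x in B, D (x, t) := by ring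
      _ = _ := by rw [hM₁, ENNReal.div_mul_cancel hvB0 hvBt]
  have htime' : ∀ t₁ ∈ I, ∀ t₂ ∈ I, t₁ ≤ t₂ → ‖A t₂ - A t₁‖ₑ ≤ b := by
    intro t₁ h₁ t₂ h₂ h12
    rw [hb, hQint _ hgm]
    exact weight_time hηc hηs hηt hBm hηD hM₂t hV hG ordConnected_Ioo
      (fun x hx t ht => heq (x, t) ⟨hx, ht⟩) h₁ h₂ h12
  have htime : ∀ t₁ ∈ I, ∀ t₂ ∈ I, ‖A t₁ - A t₂‖ₑ ≤ b := by
    intro t₁ h₁ t₂ h₂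
    rcases le_total t₁ t₂ with h | h
    · rw [← enorm_neg, neg_sub]; exact htime' t₁ h₁ t₂ h₂ h
    · exact htime' t₂ h₂ t₁ h₁ h
  have h3t : (3 : ℝ≥0∞) ^ r ≠ ⊤ := ENNReal.rpow_ne_top_of_nonneg hr0 (by norm_num)
  have hpt : ∀ z ∈ Q, ∀ w ∈ Q, ‖V z - V w‖ₑ ^ r ≤ 3 ^ r * (a z + b ^ r + a w) := by
    intro z hz w hw
    refine le_trans ?_ (rpow_add3_le _ _ _ hr)
    gcongr
    calc ‖V z - V w‖ₑ = ‖(V z - A z.2) + (A z.2 - A w.2) + (A w.2 - V w)‖ₑ := by congr 1; ring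
      _ ≤ ‖(V z - A z.2)‖ₑ + ‖(A z.2 - A w.2)‖ₑ + ‖(A w.2 - V w)‖ₑ :=
          (enorm_add_le _ _).trans (by gcongr; exact enorm_add_le _ _)
      _ ≤ _ := by
          gcongr
          · exact htime _ hz.2 _ hw.2
          · rw [← enorm_neg, neg_sub]
  calc ∫⁻ z in Q, ∫⁻ w in Q, ‖V z - V w‖ₑ ^ r
      ≤ ∫⁻ z in Q, ∫⁻ w in Q, 3 ^ r * (a z + b ^ r + a w) := by
        apply setLIntegral_mono' hQm; intro z hz
        apply setLIntegral_mono' hQm; intro w hw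
        exact hpt z hz w hw
    _ = 3 ^ r * (2 * volume Q * (∫⁻ z in Q, a z) + volume Q ^ 2 * b ^ r) := by
        have e : ∀ z, ∫⁻ w in Q, 3 ^ r * (a z + b ^ r + a w) =
            3 ^ r * (a z * volume Q + (b ^ r * volume Q + ∫⁻ w in Q, a w)) := by
          intro z
          rw [lintegral_const_mul' _ _ h3t, lintegral_add_left measurable_const,
            setLIntegral_const]
          ring
        simp_rw [e]
        rw [lintegral_const_mul' _ _ h3t, lintegral_add_left (ham.mul_const _),
          setLIntegral_const, lintegral_mul_const _ ham]
        ring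
    _ ≤ 3 ^ r * (2 * volume Q * (ENNReal.ofReal M * 2 ^ n * ENNReal.ofReal (2 * R) ^ r *
      ∫⁻ z in Q, D z) + volume Q ^ 2 * b ^ r) := by gcongr
    _ = _ := by ring

instance ptHaar (n : ℕ) : (volume : Measure (Pt n)).IsAddHaarMeasure :=
  inferInstanceAs ((volume.prod volume : Measure (Spc n × ℝ)).IsAddHaarMeasure)

theorem mol_rpow {n : ℕ} (k : ContDiffBump (0 : Pt n)) {g : Fin n → Pt n → ℝ}
    (hg : ∀ j, Measurable (g j)) {r : ℝ} (hr : 1 ≤ r) :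
    ∫⁻ z, (∑ j, ‖convolution (k.normed volume) (g j) (ContinuousLinearMap.lsmul ℝ ℝ) volume z‖ₑ) ^ r
      ≤ ∫⁻ z, (∑ j, ‖g j z‖ₑ) ^ r := by
  have hc : Continuous (k.normed (volume : Measure (Pt n))) := k.continuous_normed
  have i1 : Integrable (k.normed (volume : Measure (Pt n))) := k.integrable_normed
  set d : Pt n → ℝ≥0∞ := fun ξ => ENNReal.ofReal (k.normed volume ξ) with hd'
  have hd : Measurable d := hc.measurable.ennreal_ofReal
  set ν := (volume : Measure (Pt n)).withDensity d with hν
  have hprob : IsProbabilityMeasure ν := by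
    constructor
    rw [withDensity_apply _ MeasurableSet.univ, Measure.restrict_univ,
      ← ofReal_integral_eq_lintegral_ofReal i1 (Eventually.of_forall k.nonneg_normed),
      k.integral_normed, ENNReal.ofReal_one]
  set S : Pt n → ℝ≥0∞ := fun z => ∑ j, ‖g j z‖ₑ with hS
  have hSm : Measurable S := Finset.measurable_sum _ fun j _ => (hg j).enorm
  have h1 : ∀ z, (∑ j, ‖convolution (k.normed volume) (g j) (ContinuousLinearMap.lsmul ℝ ℝ)
      volume z‖ₑ) ^ r ≤ ∫⁻ ζ, S (z - ζ) ^ r ∂ν := by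
    intro z
    refine le_trans ?_ (jensen_prob ν (f := fun ζ => S (z - ζ))
      (hSm.comp (by fun_prop)).aemeasurable hr)
    gcongr
    have : ∫⁻ ζ, S (z - ζ) ∂ν = ∑ j, ∫⁻ ζ, ‖g j (z - ζ)‖ₑ ∂ν := by
      rw [← lintegral_finsetSum]
      intro j _
      exact ((hg j).comp (by fun_prop)).enorm
    rw [this]
    refine Finset.sum_le_sum fun j _ => ?_
    have hm : Measurable (fun ζ : Pt n => ‖g j (z - ζ)‖ₑ) :=
      ((hg j).comp (by fun_prop : Measurable fun ζ : Pt n => z - ζ)).enorm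
    rw [hν, lintegral_withDensity_eq_lintegral_mul _ hd hm, convolution_lsmul]
    refine (enorm_integral_le_lintegral_enorm _).trans (lintegral_mono fun ζ => ?_)
    simp only [Pi.mul_apply]
    rw [smul_eq_mul, enorm_mul, Real.enorm_of_nonneg (k.nonneg_normed _)]
  calc _ ≤ ∫⁻ z, ∫⁻ ζ, S (z - ζ) ^ r ∂ν := lintegral_mono h1
    _ = ∫⁻ ζ, ∫⁻ z, S (z - ζ) ^ r ∂volume ∂ν := by
        apply lintegral_lintegral_swap
        exact ((hSm.comp (by fun_prop : Measurable fun a : Pt n × Pt n => a.1 - a.2)).pow_const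
          r).aemeasurable
    _ = ∫⁻ ζ, ∫⁻ z, S z ^ r ∂volume ∂ν := by
        congr 1; ext ζ
        exact lintegral_sub_right_eq_self (fun z => S z ^ r) ζ
    _ = _ := by simp [hS]

theorem mol_fderiv {n : ℕ} {φ : Pt n → ℝ} (hφ : ContDiff ℝ (⊤ : ℕ∞) φ) (hs : HasCompactSupport φ)
    {v : Pt n → ℝ} (hv : Integrable v) (z e : Pt n) :
    fderiv ℝ (convolution φ v (ContinuousLinearMap.lsmul ℝ ℝ) volume) z e =
      - ∫ ζ, v ζ * fderiv ℝ (fun ζ => φ (z - ζ)) ζ e := by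
  have h1 := hs.hasFDerivAt_convolution_left (μ := (volume : Measure (Pt n)))
    (ContinuousLinearMap.lsmul ℝ ℝ) (hφ.of_le (by simp))
    hv.locallyIntegrable z
  rw [h1.fderiv, convolution_eq_swap, ← integral_neg]
  have hDφ : Continuous (fderiv ℝ φ) := hφ.continuous_fderiv (by simp)
  have hex : Integrable (fun t => ((ContinuousLinearMap.precompL (Pt n)
      (ContinuousLinearMap.lsmul ℝ ℝ : ℝ →L[ℝ] ℝ →L[ℝ] ℝ)) (fderiv ℝ φ (z - t))) (v t)) := by
    have := (hs.fderiv (𝕜 := ℝ)).convolutionExists_left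
      (ContinuousLinearMap.precompL (Pt n) (ContinuousLinearMap.lsmul ℝ ℝ : ℝ →L[ℝ] ℝ →L[ℝ] ℝ))
      hDφ (hv.locallyIntegrable (μ := volume)) z
    exact this.integrable_swap
  rw [ContinuousLinearMap.integral_apply hex]
  congr 1; ext ζ
  have h2 : HasFDerivAt (fun ζ => φ (z - ζ)) ((fderiv ℝ φ (z - ζ)).comp
      (-(ContinuousLinearMap.id ℝ (Pt n)))) ζ :=
    (hφ.differentiable (by simp) (z - ζ)).hasFDerivAt.comp ζ ((hasFDerivAt_id ζ).const_sub z)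
  rw [h2.fderiv]
  simp [ContinuousLinearMap.precompL_apply, mul_comm]

theorem test_props {n : ℕ} {φ : Pt n → ℝ} (hφ : ContDiff ℝ (⊤ : ℕ∞) φ) (hs : HasCompactSupport φ)
    {ε : ℝ} (hε : tsupport φ ⊆ closedBall 0 ε) (z : Pt n) :
    ContDiff ℝ (⊤ : ℕ∞) (fun ζ => φ (z - ζ)) ∧ HasCompactSupport (fun ζ => φ (z - ζ)) ∧
      tsupport (fun ζ => φ (z - ζ)) ⊆ closedBall z ε := by
  have h : tsupport (fun ζ => φ (z - ζ)) ⊆ closedBall z ε := by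
    apply closure_minimal _ isClosed_closedBall
    intro ζ hζ
    have h1 : z - ζ ∈ closedBall (0 : Pt n) ε := hε (subset_tsupport _ hζ)
    rw [mem_closedBall, dist_zero_right] at h1
    rw [mem_closedBall, dist_eq_norm, norm_sub_rev]
    exact h1
  exact ⟨hφ.comp (by fun_prop), HasCompactSupport.of_support_subset_isCompact
    (isCompact_closedBall z ε) ((subset_tsupport _).trans h), h⟩

theorem integrable_mul_dtest {n : ℕ} {ψ : Pt n → ℝ} (hψ : ContDiff ℝ (⊤ : ℕ∞) ψ)
    (hs : HasCompactSupport ψ) {v : Pt n → ℝ} (hv : Integrable v) (e : Pt n) :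
    Integrable (fun ζ => v ζ * fderiv ℝ ψ ζ e) := by
  have hc : Continuous (fun ζ => fderiv ℝ ψ ζ e) :=
    (hψ.continuous_fderiv (by simp)).clm_apply continuous_const
  obtain ⟨C, hC⟩ := (hs.fderiv_apply (𝕜 := ℝ) e).exists_bound_of_continuous hc
  exact hv.mul_bdd hc.aestronglyMeasurable (Eventually.of_forall hC)

theorem mol_ids {n : ℕ} {φ : Pt n → ℝ} (hφ : ContDiff ℝ (⊤ : ℕ∞) φ) (hs : HasCompactSupport φ)
    {ε : ℝ} (hε : tsupport φ ⊆ closedBall 0 ε) {Q : Set (Pt n)} {z : Pt n}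
    (hz : closedBall z ε ⊆ Q) {v : Pt n → ℝ} {g G : Fin n → Pt n → ℝ}
    (hv : Integrable v) (hGi : ∀ j, Integrable (G j))
    (h1 : ∀ j, ∀ ψ : Pt n → ℝ, ContDiff ℝ (⊤ : ℕ∞) ψ → HasCompactSupport ψ → tsupport ψ ⊆ Q →
      ∫ z, v z * dxj ψ j z = - ∫ z, g j z * ψ z)
    (h2 : ∀ ψ : Pt n → ℝ, ContDiff ℝ (⊤ : ℕ∞) ψ → HasCompactSupport ψ → tsupport ψ ⊆ Q →
      ∫ z, v z * fderiv ℝ ψ z (0, 1) = ∫ z, ∑ j, G j z * dxj ψ j z) :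
    (∀ j, fderiv ℝ (convolution φ v (ContinuousLinearMap.lsmul ℝ ℝ) volume) z
        (EuclideanSpace.single j 1, 0)
      = convolution φ (g j) (ContinuousLinearMap.lsmul ℝ ℝ) volume z) ∧
    fderiv ℝ (convolution φ v (ContinuousLinearMap.lsmul ℝ ℝ) volume) z (0, 1)
      = ∑ j, fderiv ℝ (convolution φ (G j) (ContinuousLinearMap.lsmul ℝ ℝ) volume) z
        (EuclideanSpace.single j 1, 0) := by
  obtain ⟨t1, t2, t3⟩ := test_props hφ hs hε z
  constructor
  · intro j
    have := h1 j _ t1 t2 (t3.trans hz)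
    simp only [dxj] at this
    rw [mol_fderiv hφ hs hv, this, neg_neg, convolution_eq_swap]
    congr 1; ext ζ; simp [mul_comm]
  · have := h2 _ t1 t2 (t3.trans hz)
    rw [mol_fderiv hφ hs hv, this, integral_finsetSum, ← Finset.sum_neg_distrib]
    · refine Finset.sum_congr rfl fun j _ => ?_
      rw [mol_fderiv hφ hs (hGi j)]; rfl
    · intro j _
      exact integrable_mul_dtest t1 t2 (hGi j) _

theorem Qrs_mono {n : ℕ} (z₀ : Pt n) {R R' τ τ' : ℝ} (hR : R ≤ R') (hτ : τ ≤ τ') :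
    Qrs z₀ R τ ⊆ Qrs z₀ R' τ' :=
  Set.prod_mono (ball_subset_ball hR) (Ioo_subset_Ioo (by linarith) (by linarith))

theorem Qrs_meas {n : ℕ} (z₀ : Pt n) (R τ : ℝ) : MeasurableSet (Qrs z₀ R τ) :=
  measurableSet_ball.prod measurableSet_Ioo

set_option maxHeartbeats 200000 in
theorem poincare_core (n : ℕ) : ∃ M : ℝ, 0 < M ∧ ∀ (z₀ : Pt n) (R τ : ℝ), 0 < R → 0 < τ →
    ∀ (v : Pt n → ℝ) (g G : Fin n → Pt n → ℝ), Integrable v →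
    (∀ j, Measurable (g j)) → (∀ j, Integrable (g j)) →
    (∀ j, Measurable (G j)) → (∀ j, Integrable (G j)) →
    (∀ j, ∀ ψ : Pt n → ℝ, ContDiff ℝ (⊤ : ℕ∞) ψ → HasCompactSupport ψ →
      tsupport ψ ⊆ Qrs z₀ R τ → ∫ z, v z * dxj ψ j z = - ∫ z, g j z * ψ z) →
    (∀ ψ : Pt n → ℝ, ContDiff ℝ (⊤ : ℕ∞) ψ → HasCompactSupport ψ → tsupport ψ ⊆ Qrs z₀ R τ →
      ∫ z, v z * fderiv ℝ ψ z (0, 1) = ∫ z, ∑ j, G j z * dxj ψ j z) →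
    ∀ r : ℝ, 1 ≤ r →
    ∫⁻ z in Qrs z₀ R τ, ∫⁻ w in Qrs z₀ R τ, ‖v z - v w‖ₑ ^ r ≤
      3 ^ r * (2 * (ENNReal.ofReal M * 2 ^ n * ENNReal.ofReal (2 * R) ^ r) *
        volume (Qrs z₀ R τ) * (∫⁻ z, (∑ j, ‖g j z‖ₑ) ^ r)
        + volume (Qrs z₀ R τ) ^ 2 * (ENNReal.ofReal M /
          (ENNReal.ofReal (R / 2) * volume (ball z₀.1 (R / 2))) * ∫⁻ z, ∑ j, ‖G j z‖ₑ) ^ r) := by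
  obtain ⟨M, hM0, hM⟩ := smooth_cyl n
  refine ⟨M, hM0, fun z₀ R τ hR hτ v g G hv hgm hgi hGm hGi h1 h2 r hr => ?_⟩
  have hr0 : 0 ≤ r := by linarith
  set B := 3 ^ r * (2 * (ENNReal.ofReal M * 2 ^ n * ENNReal.ofReal (2 * R) ^ r) *
        volume (Qrs z₀ R τ) * (∫⁻ z, (∑ j, ‖g j z‖ₑ) ^ r)
        + volume (Qrs z₀ R τ) ^ 2 * (ENNReal.ofReal M /
          (ENNReal.ofReal (R / 2) * volume (ball z₀.1 (R / 2))) * ∫⁻ z, ∑ j, ‖G j z‖ₑ) ^ r)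
    with hB
  set l : ℕ → ℝ := fun k => 1 - 1 / ((k : ℝ) + 2) with hl
  set e : ℕ → ℝ := fun k => min R τ / (2 * ((k : ℝ) + 2)) with he
  have hm : 0 < min R τ := lt_min hR hτ
  have hk2 : ∀ k : ℕ, 0 < (k : ℝ) + 2 := fun k => by positivity
  have he0 : ∀ k, 0 < e k := fun k => by simp only [he]; have := hk2 k; positivity
  have hl1 : ∀ k, l k ≤ 1 := fun k => by
    have := hk2 k
    have : 0 ≤ 1 / ((k : ℝ) + 2) := by positivity
    simp only [hl]; linarith
  have hl2 : ∀ k, 1 / 2 ≤ l k := fun k => by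
    have : 1 / ((k : ℝ) + 2) ≤ 1 / 2 :=
      one_div_le_one_div_of_le (by norm_num) (by have := k.cast_nonneg (α := ℝ); linarith)
    simp only [hl]; linarith
  have hle : ∀ k, ∀ x, min R τ ≤ x → l k * x + e k < x := fun k x hx => by
    have h := hk2 k
    have hx0 : 0 < x := hm.trans_le hx
    have h3 : e k ≤ x / (2 * ((k : ℝ) + 2)) := by simp only [he]; gcongr
    have h4 : l k * x + x / (2 * ((k : ℝ) + 2)) = x - x / (2 * ((k : ℝ) + 2)) := by
      simp only [hl]; field_simp; ring
    have h5 : 0 < x / (2 * ((k : ℝ) + 2)) := by positivity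
    linarith
  have htend : Tendsto (fun k : ℕ => 1 / ((k : ℝ) + 2)) atTop (𝓝 0) := by
    have := (tendsto_add_atTop_iff_nat 2).2 (tendsto_one_div_atTop_nhds_zero_nat (𝕜 := ℝ))
    simpa using this
  have hltend : Tendsto l atTop (𝓝 1) := by
    simpa [hl] using htend.const_sub 1
  have hetend : Tendsto e atTop (𝓝 0) := by
    have : e = fun k : ℕ => (min R τ / 2) * (1 / ((k : ℝ) + 2)) := by
      ext k; simp only [he]; have := hk2 k; field_simp
    rw [this]; simpa using htend.const_mul (min R τ / 2)
  let b : ℕ → ContDiffBump (0 : Pt n) := fun k =>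
    ⟨e k / 2, e k, by have := he0 k; linarith, by have := he0 k; linarith⟩
  set V : ℕ → Pt n → ℝ := fun k =>
    convolution ((b k).normed volume) v (ContinuousLinearMap.lsmul ℝ ℝ) volume with hV
  set Q := Qrs z₀ R τ with hQ
  set Qk : ℕ → Set (Pt n) := fun k => Qrs z₀ (l k * R) (l k * τ) with hQk
  have hbs : ∀ k, ContDiff ℝ (⊤ : ℕ∞) ((b k).normed (volume : Measure (Pt n))) := fun k =>
    (b k).contDiff_normed
  have hbc : ∀ k, HasCompactSupport ((b k).normed (volume : Measure (Pt n))) := fun k =>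
    (b k).hasCompactSupport_normed
  have hbt : ∀ k, tsupport ((b k).normed (volume : Measure (Pt n))) ⊆ closedBall 0 (e k) :=
    fun k => by rw [(b k).tsupport_normed_eq]
  have hQsub : ∀ k, Qk k ⊆ Q := fun k => Qrs_mono z₀ (by nlinarith [hl1 k]) (by nlinarith [hl1 k])
  have hball : ∀ k, ∀ z ∈ Qk k, closedBall z (e k) ⊆ Q := by
    intro k z hz w hw
    rw [mem_closedBall, Prod.dist_eq, max_le_iff] at hw
    have hz1 : dist z.1 z₀.1 < l k * R := hz.1
    have hz2 := hz.2
    rw [mem_Ioo] at hz2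
    have a1 := hle k R (min_le_left _ _)
    have a2 := hle k τ (min_le_right _ _)
    have a3 := hw.2
    rw [Real.dist_eq, abs_le] at a3
    refine ⟨?_, ?_, ?_⟩
    · rw [mem_ball]; linarith [dist_triangle w.1 z.1 z₀.1, hw.1]
    · linarith [hz2.1, a3.1]
    · linarith [hz2.2, a3.2]
  have hcd : ∀ k, ∀ f : Pt n → ℝ, Integrable f →
      ContDiff ℝ 1 (convolution ((b k).normed volume) f (ContinuousLinearMap.lsmul ℝ ℝ) volume) :=
    fun k f hf => (hbc k).contDiff_convolution_left _ ((hbs k).of_le (by simp))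
      hf.locallyIntegrable
  have hVc : ∀ k, Measurable (V k) := fun k => (hcd k v hv).continuous.measurable
  set f : ℕ → Pt n → Pt n → ℝ≥0∞ := fun k z w =>
    (Qk k).indicator (fun z => (Qk k).indicator (fun w => ‖V k z - V k w‖ₑ ^ r) w) z with hf
  have hbound : ∀ k, ∫⁻ z in Q, ∫⁻ w in Q, f k z w ≤ B := by
    intro k
    have e1 : ∫⁻ z in Q, ∫⁻ w in Q, f k z w =
        ∫⁻ z in Qk k, ∫⁻ w in Qk k, ‖V k z - V k w‖ₑ ^ r := by
      have : ∀ z, ∫⁻ w in Q, f k z w =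
          (Qk k).indicator (fun z => ∫⁻ w in Qk k, ‖V k z - V k w‖ₑ ^ r) z := by
        intro z
        by_cases hz : z ∈ Qk k
        · simp only [hf, indicator_of_mem hz]
          rw [setLIntegral_indicator (Qrs_meas _ _ _), inter_eq_left.2 (hQsub k)]
        · simp [hf, indicator_of_notMem hz]
      simp_rw [this]
      rw [setLIntegral_indicator (Qrs_meas _ _ _), inter_eq_left.2 (hQsub k)]
    rw [e1]
    have hlR : R / 2 ≤ l k * R := by nlinarith [hl2 k]
    have hlR' : l k * R ≤ R := by nlinarith [hl1 k]
    have ids := fun z hz => mol_ids (hbs k) (hbc k) (hbt k) (hball k z hz) hv hGi h1 h2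
    refine (hM z₀ (l k * R) (l k * τ) (by linarith) (V k)
      (fun j => convolution ((b k).normed volume) (G j) (ContinuousLinearMap.lsmul ℝ ℝ) volume)
      (hcd k v hv) (fun j => hcd k _ (hGi j)) (fun z hz => (ids z hz).2) r hr).trans ?_
    have k1 : ∫⁻ z in Qk k, (∑ j, ‖fderiv ℝ (V k) z (EuclideanSpace.single j 1, 0)‖ₑ) ^ r ≤
        ∫⁻ z, (∑ j, ‖g j z‖ₑ) ^ r := by
      refine le_trans ?_ (mol_rpow (b k) hgm hr)
      refine le_trans (le_of_eq ?_) (setLIntegral_le_lintegral (Qk k) _)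
      refine setLIntegral_congr_fun (Qrs_meas _ _ _) fun z hz => ?_
      have := (ids z hz).1
      simp only [hV, this]
    have k2 : ∫⁻ z in Qk k, ∑ j, ‖convolution ((b k).normed volume) (G j)
        (ContinuousLinearMap.lsmul ℝ ℝ) volume z‖ₑ ≤ ∫⁻ z, ∑ j, ‖G j z‖ₑ := by
      have := mol_rpow (b k) hGm le_rfl
      simp only [ENNReal.rpow_one] at this
      exact (setLIntegral_le_lintegral (Qk k) _).trans this
    rw [hB]
    have hvol : volume (Qk k) ≤ volume Q := measure_mono (hQsub k)
    gcongr
  have hae := ContDiffBump.ae_convolution_tendsto_right_of_locallyIntegrable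
    (μ := (volume : Measure (Pt n))) (φ := b) (l := atTop) (K := 2) (g := v) hetend
    (Eventually.of_forall fun k => by simp only [b]; linarith) hv.locallyIntegrable
  have hev : ∀ z ∈ Q, ∀ᶠ k in atTop, z ∈ Qk k := by
    intro z hz
    have a1 : dist z.1 z₀.1 < R := hz.1
    have a2 := hz.2
    rw [mem_Ioo] at a2
    have t1 : Tendsto (fun k => l k * R) atTop (𝓝 R) := by simpa using hltend.mul_const R
    have t2 : Tendsto (fun k => l k * τ) atTop (𝓝 τ) := by simpa using hltend.mul_const τ
    filter_upwards [t1.eventually_const_lt a1,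
      t2.eventually_const_lt (show z₀.2 - z.2 < τ by linarith),
      t2.eventually_const_lt (show z.2 - z₀.2 < τ by linarith)] with k b1 b2 b3
    exact ⟨b1, by linarith, by linarith⟩
  have hfm : ∀ k, Measurable (Function.uncurry (f k)) := by
    intro k
    have : Function.uncurry (f k) = (Qk k ×ˢ Qk k).indicator
        (fun a : Pt n × Pt n => ‖V k a.1 - V k a.2‖ₑ ^ r) := by
      ext ⟨z, w⟩
      by_cases hz : z ∈ Qk k <;> by_cases hw : w ∈ Qk k <;> simp [hf, hz, hw]
    rw [this]
    refine Measurable.indicator ?_ ((Qrs_meas _ _ _).prod (Qrs_meas _ _ _))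
    exact ((((hVc k).comp measurable_fst).sub ((hVc k).comp measurable_snd)).enorm).pow_const r
  have s1 : ∫⁻ z in Q, ∫⁻ w in Q, ‖v z - v w‖ₑ ^ r
      ≤ ∫⁻ z in Q, ∫⁻ w in Q, liminf (fun k => f k z w) atTop := by
        have hae' := ae_restrict_of_ae (s := Q) hae
        refine lintegral_mono_ae ?_
        filter_upwards [hae', ae_restrict_mem (Qrs_meas z₀ R τ)] with z hz hzQ
        refine lintegral_mono_ae ?_
        filter_upwards [hae', ae_restrict_mem (Qrs_meas z₀ R τ)] with w hw hwQ
        have ht : Tendsto (fun k => f k z w) atTop (𝓝 (‖v z - v w‖ₑ ^ r)) := by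
          have t0 : Tendsto (fun k => ‖V k z - V k w‖ₑ ^ r) atTop (𝓝 (‖v z - v w‖ₑ ^ r)) :=
            ((ENNReal.continuous_rpow_const (y := r)).tendsto _).comp ((hz.sub hw).enorm)
          refine t0.congr' ?_
          filter_upwards [hev z hzQ, hev w hwQ] with k h1 h2
          simp [hf, h1, h2]
        exact ht.liminf_eq.ge
  have s2 : ∫⁻ z in Q, ∫⁻ w in Q, liminf (fun k => f k z w) atTop
      ≤ ∫⁻ z in Q, liminf (fun k => ∫⁻ w in Q, f k z w) atTop := by
    refine lintegral_mono fun z => lintegral_liminf_le fun k => ?_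
    exact (hfm k).of_uncurry_left
  have s3 : ∫⁻ z in Q, liminf (fun k => ∫⁻ w in Q, f k z w) atTop
      ≤ liminf (fun k => ∫⁻ z in Q, ∫⁻ w in Q, f k z w) atTop :=
    lintegral_liminf_le fun k => (hfm k).lintegral_prod_right
  have s4 : liminf (fun k => ∫⁻ z in Q, ∫⁻ w in Q, f k z w) atTop ≤ B :=
    (liminf_le_liminf (v := fun _ : ℕ => B) (Eventually.of_forall hbound)).trans (by simp)
  exact s1.trans (s2.trans (s3.trans s4))

/-- normalized measure on a set -/
def nuQ {n : ℕ} (Q : Set (Pt n)) : Measure (Pt n) :=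
  ((volume.restrict Q) univ)⁻¹ • volume.restrict Q

theorem nuQ_lintegral {n : ℕ} (Q : Set (Pt n)) (f : Pt n → ℝ≥0∞) :
    ∫⁻ z, f z ∂(nuQ Q) = (volume Q)⁻¹ * ∫⁻ z in Q, f z := by
  rw [nuQ, lintegral_smul_measure, Measure.restrict_apply_univ, smul_eq_mul]

theorem Qrs_vol {n : ℕ} (z₀ : Pt n) (R τ : ℝ) :
    volume (Qrs z₀ R τ) = volume (ball z₀.1 R) * ENNReal.ofReal (2 * τ) := by
  rw [Qrs, Measure.volume_eq_prod, Measure.prod_prod, Real.volume_Ioo]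
  congr 2; ring

theorem Qrs_vol_pos {n : ℕ} (z₀ : Pt n) {R τ : ℝ} (hR : 0 < R) (hτ : 0 < τ) :
    volume (Qrs z₀ R τ) ≠ 0 := by
  rw [Qrs_vol]
  exact mul_ne_zero (measure_ball_pos _ _ hR).ne' (by simpa using hτ)

theorem Qrs_vol_top {n : ℕ} (z₀ : Pt n) (R τ : ℝ) : volume (Qrs z₀ R τ) ≠ ⊤ := by
  rw [Qrs_vol]
  exact ENNReal.mul_ne_top measure_ball_lt_top.ne ENNReal.ofReal_ne_top

theorem nuQ_prob {n : ℕ} (z₀ : Pt n) {R τ : ℝ} (hR : 0 < R) (hτ : 0 < τ) :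
    IsProbabilityMeasure (nuQ (Qrs z₀ R τ)) := by
  constructor
  rw [nuQ, Measure.smul_apply, smul_eq_mul, Measure.restrict_apply_univ]
  exact ENNReal.inv_mul_cancel (Qrs_vol_pos z₀ hR hτ) (Qrs_vol_top z₀ R τ)

theorem core_nu (n : ℕ) : ∃ M : ℝ, 0 < M ∧ ∀ (z₀ : Pt n) (R τ : ℝ), 0 < R → 0 < τ →
    ∀ (v : Pt n → ℝ) (g G : Fin n → Pt n → ℝ), IntegrableOn v (Qrs z₀ R τ) →
    (∀ j, Measurable (g j)) → (∀ j, IntegrableOn (g j) (Qrs z₀ R τ)) →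
    (∀ j, Measurable (G j)) → (∀ j, IntegrableOn (G j) (Qrs z₀ R τ)) →
    (∀ j, ∀ ψ : Pt n → ℝ, ContDiff ℝ (⊤ : ℕ∞) ψ → HasCompactSupport ψ →
      tsupport ψ ⊆ Qrs z₀ R τ →
      ∫ z in Qrs z₀ R τ, v z * dxj ψ j z = - ∫ z in Qrs z₀ R τ, g j z * ψ z) →
    (∀ ψ : Pt n → ℝ, ContDiff ℝ (⊤ : ℕ∞) ψ → HasCompactSupport ψ → tsupport ψ ⊆ Qrs z₀ R τ →
      ∫ z in Qrs z₀ R τ, v z * fderiv ℝ ψ z (0, 1) =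
        ∫ z in Qrs z₀ R τ, ∑ j, G j z * dxj ψ j z) →
    ∀ r : ℝ, 1 ≤ r →
    ∫⁻ z, ∫⁻ w, ‖v z - v w‖ₑ ^ r ∂(nuQ (Qrs z₀ R τ)) ∂(nuQ (Qrs z₀ R τ)) ≤
      3 ^ r * (2 * (ENNReal.ofReal M * 2 ^ n * ENNReal.ofReal (2 * R) ^ r) *
        (∫⁻ z, (∑ j, ‖g j z‖ₑ) ^ r ∂(nuQ (Qrs z₀ R τ)))
        + (ENNReal.ofReal (M * 2 ^ (n + 2) * τ / R) *
          ∫⁻ z, ∑ j, ‖G j z‖ₑ ∂(nuQ (Qrs z₀ R τ))) ^ r) := by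
  obtain ⟨M, hM0, hM⟩ := poincare_core n
  refine ⟨M, hM0, fun z₀ R τ hR hτ v g G hv hgm hgi hGm hGi h1 h2 r hr => ?_⟩
  have hr0 : 0 ≤ r := by linarith
  set Q := Qrs z₀ R τ with hQ
  have hQm : MeasurableSet Q := Qrs_meas _ _ _
  have hQ0 : volume Q ≠ 0 := Qrs_vol_pos z₀ hR hτ
  have hQt : volume Q ≠ ⊤ := Qrs_vol_top z₀ R τ
  have key := hM z₀ R τ hR hτ (Q.indicator v) (fun j => Q.indicator (g j))
    (fun j => Q.indicator (G j)) (hv.integrable_indicator hQm)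
    (fun j => (hgm j).indicator hQm) (fun j => (hgi j).integrable_indicator hQm)
    (fun j => (hGm j).indicator hQm) (fun j => (hGi j).integrable_indicator hQm)
    (fun j ψ a b c => by
      have := h1 j ψ a b c
      rw [← integral_indicator hQm, ← integral_indicator hQm] at this
      simpa only [indicator_mul_left] using this)
    (fun ψ a b c => by
      have := h2 ψ a b c
      rw [← integral_indicator hQm, ← integral_indicator hQm] at this
      have e : ∀ z, Q.indicator (fun z => ∑ j, G j z * dxj ψ j z) z =
          ∑ j, Q.indicator (G j) z * dxj ψ j z := by
        intro z; by_cases hz : z ∈ Q <;> simp [hz]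
      simpa only [indicator_mul_left, e] using this) r hr
  have hv1 : ∀ z ∈ Q, ∫⁻ w in Q, ‖Q.indicator v z - Q.indicator v w‖ₑ ^ r =
      ∫⁻ w in Q, ‖v z - v w‖ₑ ^ r := by
    intro z hz
    refine setLIntegral_congr_fun hQm fun w hw => ?_
    simp [hz, hw]
  rw [setLIntegral_congr_fun hQm hv1] at key
  have e1 : ∫⁻ z, (∑ j, ‖Q.indicator (g j) z‖ₑ) ^ r = ∫⁻ z in Q, (∑ j, ‖g j z‖ₑ) ^ r := by
    rw [← lintegral_indicator hQm]
    congr 1; ext z; by_cases hz : z ∈ Q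
    · simp [hz]
    · simp [hz, ENNReal.zero_rpow_of_pos (by linarith : 0 < r)]
  have e2 : ∫⁻ z, ∑ j, ‖Q.indicator (G j) z‖ₑ = ∫⁻ z in Q, ∑ j, ‖G j z‖ₑ := by
    rw [← lintegral_indicator hQm]
    congr 1; ext z; by_cases hz : z ∈ Q <;> simp [hz]
  rw [e1, e2] at key
  have hnn : ∫⁻ z, ∫⁻ w, ‖v z - v w‖ₑ ^ r ∂(nuQ Q) ∂(nuQ Q) =
      (volume Q)⁻¹ * ((volume Q)⁻¹ * ∫⁻ z in Q, ∫⁻ w in Q, ‖v z - v w‖ₑ ^ r) := by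
    rw [nuQ_lintegral]
    simp_rw [nuQ_lintegral]
    rw [lintegral_const_mul']
    exact ENNReal.inv_ne_top.2 hQ0
  rw [hnn, nuQ_lintegral, nuQ_lintegral]
  set A := ∫⁻ z in Q, (∑ j, ‖g j z‖ₑ) ^ r
  set C := ∫⁻ z in Q, ∑ j, ‖G j z‖ₑ
  have hconst : ENNReal.ofReal M / (ENNReal.ofReal (R / 2) * volume (ball z₀.1 (R / 2))) =
      ENNReal.ofReal (M * 2 ^ (n + 2) * τ / R) * (volume Q)⁻¹ := by
    have hb : volume (ball z₀.1 R) = 2 ^ n * volume (ball z₀.1 (R / 2)) := by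
      have := Measure.addHaar_ball_mul_of_pos (volume : Measure (Spc n)) z₀.1
        (by norm_num : (0 : ℝ) < 2) (R / 2)
      rw [show 2 * (R / 2) = R by ring] at this
      rw [this, Measure.addHaar_ball_center volume z₀.1 (R / 2), finrank_euclideanSpace_fin,
        ENNReal.ofReal_pow (by norm_num)]
      simp
    have hb0 : volume (ball z₀.1 (R / 2)) ≠ 0 := (measure_ball_pos _ _ (by linarith)).ne'
    have hbt : volume (ball z₀.1 (R / 2)) ≠ ⊤ := measure_ball_lt_top.ne
    rw [hQ, Qrs_vol, hb]
    have x1 : ENNReal.ofReal (R / 2) ≠ 0 := by simpa using hR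
    have x2 : ENNReal.ofReal (2 * τ) ≠ 0 := by simpa using hτ
    rw [← div_eq_mul_inv (ENNReal.ofReal (M * 2 ^ (n + 2) * τ / R)), ENNReal.div_eq_div_iff]
    · have : M * 2 ^ (n + 2) * τ / R * (R / 2) = M * (2 ^ n * (2 * τ)) := by
        field_simp; ring
      have h' := congrArg ENNReal.ofReal this
      rw [ENNReal.ofReal_mul (by positivity), ENNReal.ofReal_mul hM0.le,
        ENNReal.ofReal_mul (by positivity), ENNReal.ofReal_pow (by norm_num)] at h'
      simp only [ENNReal.ofReal_ofNat] at h'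
      calc _ = (ENNReal.ofReal (M * 2 ^ (n + 2) * τ / R) * ENNReal.ofReal (R / 2)) *
            volume (ball z₀.1 (R / 2)) := by rw [h']; ring
        _ = _ := by ring
    all_goals first
      | exact mul_ne_zero (mul_ne_zero (by simp) hb0) x2
      | exact mul_ne_zero x1 hb0
      | exact ENNReal.mul_ne_top (ENNReal.mul_ne_top (by simp) hbt) ENNReal.ofReal_ne_top
      | exact ENNReal.mul_ne_top ENNReal.ofReal_ne_top hbt
  rw [hconst] at key
  refine (mul_le_mul' le_rfl (mul_le_mul' le_rfl key)).trans (le_of_eq ?_)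
  rw [← hQ]
  calc _ = 3 ^ r * (2 * (ENNReal.ofReal M * 2 ^ n * ENNReal.ofReal (2 * R) ^ r) *
          (((volume Q)⁻¹ * volume Q) * ((volume Q)⁻¹ * A)) +
          (((volume Q)⁻¹ * volume Q) * ((volume Q)⁻¹ * volume Q)) *
          (ENNReal.ofReal (M * 2 ^ (n + 2) * τ / R) * (volume Q)⁻¹ * C) ^ r) := by ring
    _ = _ := by
        rw [ENNReal.inv_mul_cancel hQ0 hQt, one_mul, one_mul, one_mul, mul_assoc _ _ C]

theorem mnorm_nonneg' {N n : ℕ} (A : Mat N n) : 0 ≤ mnorm A := Real.sqrt_nonneg _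

theorem vnorm_nonneg' {N : ℕ} (v : Vec N) : 0 ≤ vnorm v := Real.sqrt_nonneg _

theorem abs_le_mnorm {N n : ℕ} (A : Mat N n) (i : Fin N) (j : Fin n) : |A i j| ≤ mnorm A := by
  rw [mnorm, mdot]
  apply Real.abs_le_sqrt
  rw [sq]
  refine le_trans ?_ (Finset.single_le_sum (f := fun i => ∑ j, A i j * A i j)
    (fun i _ => Finset.sum_nonneg fun j _ => mul_self_nonneg _) (Finset.mem_univ i))
  exact Finset.single_le_sum (f := fun j => A i j * A i j)
    (fun j _ => mul_self_nonneg _) (Finset.mem_univ j)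

theorem abs_le_vnorm {N : ℕ} (v : Vec N) (i : Fin N) : |v i| ≤ vnorm v := by
  rw [vnorm, vdot]
  apply Real.abs_le_sqrt
  rw [sq]
  exact Finset.single_le_sum (f := fun j => v j * v j)
    (fun j _ => mul_self_nonneg _) (Finset.mem_univ i)

theorem vnorm_le_sum {N : ℕ} (v : Vec N) : vnorm v ≤ ∑ i, |v i| := by
  rw [vnorm, vdot]
  apply Real.sqrt_le_iff.2
  refine ⟨Finset.sum_nonneg fun i _ => abs_nonneg _, ?_⟩
  have := Finset.sum_sq_le_sq_sum_of_nonneg (s := Finset.univ) (f := fun i => |v i|)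
    (fun i _ => abs_nonneg _)
  simpa [sq_abs, sq] using this

theorem measurable_mnorm {N n : ℕ} {f : Pt n → Mat N n} (hf : Measurable f) :
    Measurable (fun z => mnorm (f z)) := by
  unfold mnorm mdot
  have : ∀ i j, Measurable fun z => f z i j := fun i j =>
    (measurable_pi_apply j).comp ((measurable_pi_apply i).comp hf)
  exact (Finset.measurable_sum _ fun i _ => Finset.measurable_sum _ fun j _ =>
    (this i j).mul (this i j)).sqrt

theorem measurable_vnorm {N n : ℕ} {f : Pt n → Vec N} (hf : Measurable f) :
    Measurable (fun z => vnorm (f z)) := by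
  unfold vnorm vdot
  have : ∀ i, Measurable fun z => f z i := fun i => (measurable_pi_apply i).comp hf
  exact (Finset.measurable_sum _ fun i _ => (this i).mul (this i)).sqrt

section sol
variable {n N : ℕ} {p q α L₁ L₂ aH : ℝ}

theorem HDu_nonneg (S : Setting n N p q α L₁ L₂ aH) (Du : Pt n → Mat N n) (z : Pt n) :
    0 ≤ HDu S Du z := by
  have := S.ha0 z
  have := mnorm_nonneg' (Du z)
  unfold HDu Hf; positivity

theorem HFf_nonneg (S : Setting n N p q α L₁ L₂ aH) (z : Pt n) :
    0 ≤ HFf S z := by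
  have := S.ha0 z
  have := mnorm_nonneg' (S.F z)
  unfold HFf Hf; positivity

/-- total energy -/
def EE (S : Setting n N p q α L₁ L₂ aH) (Du : Pt n → Mat N n) (z : Pt n) : ℝ :=
  HDu S Du z + HFf S z

theorem EE_nonneg (S : Setting n N p q α L₁ L₂ aH) (Du : Pt n → Mat N n) (z : Pt n) :
    0 ≤ EE S Du z := add_nonneg (HDu_nonneg S Du z) (HFf_nonneg S z)

theorem HDu_meas (S : Setting n N p q α L₁ L₂ aH) {Du : Pt n → Mat N n} (h : Measurable Du) :
    Measurable (HDu S Du) := by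
  unfold HDu Hf
  exact ((measurable_mnorm h).pow_const _).add (S.haM.mul ((measurable_mnorm h).pow_const _))

theorem HFf_meas (S : Setting n N p q α L₁ L₂ aH) : Measurable (HFf S) := by
  unfold HFf Hf
  exact ((measurable_mnorm S.hFM).pow_const _).add
    (S.haM.mul ((measurable_mnorm S.hFM).pow_const _))

theorem EE_meas (S : Setting n N p q α L₁ L₂ aH) {Du : Pt n → Mat N n} (h : Measurable Du) :
    Measurable (EE S Du) := (HDu_meas S h).add (HFf_meas S)

theorem Du_le_EE (S : Setting n N p q α L₁ L₂ aH) (Du : Pt n → Mat N n) (z : Pt n) {t : ℝ}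
    (ht : 0 ≤ t) : mnorm (Du z) ^ t ≤ EE S Du z ^ (t / p) := by
  have hp : 0 < p := by linarith [S.hp2]
  have h1 : mnorm (Du z) ^ p ≤ EE S Du z := by
    have := HFf_nonneg S z
    have h2 : mnorm (Du z) ^ p ≤ HDu S Du z := by
      have := S.ha0 z
      have := mnorm_nonneg' (Du z)
      unfold HDu Hf
      have : 0 ≤ S.a z * mnorm (Du z) ^ q := by positivity
      linarith
    unfold EE; linarith
  have h0 := mnorm_nonneg' (Du z)
  have : mnorm (Du z) ^ t = (mnorm (Du z) ^ p) ^ (t / p) := by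
    rw [← Real.rpow_mul h0]; congr 1; field_simp
  rw [this]
  exact Real.rpow_le_rpow (by positivity) h1 (by positivity)

theorem F_le_EE (S : Setting n N p q α L₁ L₂ aH) (Du : Pt n → Mat N n) (z : Pt n) {t : ℝ}
    (ht : 0 ≤ t) : mnorm (S.F z) ^ t ≤ EE S Du z ^ (t / p) := by
  have hp : 0 < p := by linarith [S.hp2]
  have h1 : mnorm (S.F z) ^ p ≤ EE S Du z := by
    have := HDu_nonneg S Du z
    have h2 : mnorm (S.F z) ^ p ≤ HFf S z := by
      have := S.ha0 z
      have := mnorm_nonneg' (S.F z)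
      unfold HFf Hf
      have : 0 ≤ S.a z * mnorm (S.F z) ^ q := by positivity
      linarith
    unfold EE; linarith
  have h0 := mnorm_nonneg' (S.F z)
  have : mnorm (S.F z) ^ t = (mnorm (S.F z) ^ p) ^ (t / p) := by
    rw [← Real.rpow_mul h0]; congr 1; field_simp
  rw [this]
  exact Real.rpow_le_rpow (by positivity) h1 (by positivity)

theorem rhsF_le (S : Setting n N p q α L₁ L₂ aH) (z : Pt n) (i : Fin N) (j : Fin n) :
    |rhsF S z i j| ≤ mnorm (S.F z) ^ (p - 1) + S.a z * mnorm (S.F z) ^ (q - 1) := by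
  have h0 := mnorm_nonneg' (S.F z)
  have ha := S.ha0 z
  have hF := abs_le_mnorm (S.F z) i j
  have key : ∀ t : ℝ, 2 < t → mnorm (S.F z) ^ (t - 2) * |S.F z i j| ≤ mnorm (S.F z) ^ (t - 1) := by
    intro t ht
    have : mnorm (S.F z) ^ (t - 1) = mnorm (S.F z) ^ (t - 2) * mnorm (S.F z) := by
      rw [← Real.rpow_add_one' h0 (by linarith)]; congr 1; ring
    rw [this]; gcongr
  unfold rhsF
  refine (abs_add_le _ _).trans (add_le_add ?_ ?_)
  · rw [abs_mul, abs_of_nonneg (by positivity)]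
    exact key p S.hp2
  · rw [abs_mul, abs_mul, abs_of_nonneg ha, abs_of_nonneg (by positivity), mul_assoc]
    exact mul_le_mul_of_nonneg_left (key q (by linarith [S.hp2, S.hpq])) ha

/-- flux -/
def GG (S : Setting n N p q α L₁ L₂ aH) (Du : Pt n → Mat N n) (i : Fin N) (j : Fin n)
    (z : Pt n) : ℝ := S.A z (Du z) i j - rhsF S z i j

theorem GG_le (S : Setting n N p q α L₁ L₂ aH) (Du : Pt n → Mat N n) :
    ∀ᵐ z ∂(volume.restrict (cyl S.Ω S.T)), ∀ i j, |GG S Du i j z| ≤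
      (L₂ + 1) * (EE S Du z ^ ((p - 1) / p) + S.a z * EE S Du z ^ ((q - 1) / p)) := by
  filter_upwards [S.hAgrow] with z hz i j
  have h1 := (abs_le_mnorm (S.A z (Du z)) i j).trans (hz (Du z))
  have h2 := rhsF_le S z i j
  have p1 : 0 ≤ p - 1 := by linarith [S.hp2]
  have q1 : 0 ≤ q - 1 := by linarith [S.hp2, S.hpq]
  have ha := S.ha0 z
  have hL : 0 ≤ L₂ := by linarith [S.hL₁, S.hL₁₂]
  have a1 := Du_le_EE S Du z p1
  have a2 := Du_le_EE S Du z q1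
  have a3 := F_le_EE S Du z p1
  have a4 := F_le_EE S Du z q1
  calc |GG S Du i j z| ≤ |S.A z (Du z) i j| + |rhsF S z i j| := abs_sub _ _
    _ ≤ L₂ * (EE S Du z ^ ((p - 1) / p) + S.a z * EE S Du z ^ ((q - 1) / p))
        + (EE S Du z ^ ((p - 1) / p) + S.a z * EE S Du z ^ ((q - 1) / p)) := by
        refine add_le_add (h1.trans ?_) (h2.trans ?_) <;> gcongr
    _ = _ := by ring

theorem GG_meas (S : Setting n N p q α L₁ L₂ aH) {Du : Pt n → Mat N n} (h : Measurable Du)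
    (i : Fin N) (j : Fin n) : Measurable (GG S Du i j) := by
  have h1 : Measurable fun z => S.A z (Du z) := S.hAM.comp (measurable_id.prodMk h)
  have h2 : Measurable fun z => S.A z (Du z) i j :=
    (measurable_pi_apply j).comp ((measurable_pi_apply i).comp h1)
  have h3 : Measurable fun z => S.F z i j :=
    (measurable_pi_apply j).comp ((measurable_pi_apply i).comp S.hFM)
  have h4 := measurable_mnorm S.hFM
  have h5 := S.haM
  unfold GG rhsF
  exact h2.sub (((h4.pow_const _).mul h3).add ((h5.mul (h4.pow_const _)).mul h3))

theorem cyl_meas (S : Setting n N p q α L₁ L₂ aH) : MeasurableSet (cyl S.Ω S.T) :=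
  S.hΩo.measurableSet.prod measurableSet_Ioo

theorem cyl_fin (S : Setting n N p q α L₁ L₂ aH) : volume (cyl S.Ω S.T) ≠ ⊤ := by
  rw [cyl, Measure.volume_eq_prod, Measure.prod_prod]
  exact ENNReal.mul_ne_top S.hΩb.measure_lt_top.ne (by simp)

theorem EE_int (S : Setting n N p q α L₁ L₂ aH) {u : Pt n → Vec N} {Du : Pt n → Mat N n} {δ : ℝ}
    (h : VeryWeakSolution S u Du δ) {t : ℝ} (ht0 : 0 ≤ t) (ht : t ≤ δ) :
    IntegrableOn (fun z => EE S Du z ^ t) (cyl S.Ω S.T) := by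
  have hδ := h.hδ
  have : IsFiniteMeasure (volume.restrict (cyl S.Ω S.T)) :=
    ⟨by rw [Measure.restrict_apply_univ]; exact (cyl_fin S).lt_top⟩
  have i1 : Integrable (fun z => 1 + (HDu S Du z ^ δ + (1 + HFf S z)))
      (volume.restrict (cyl S.Ω S.T)) :=
    (integrable_const _).add ((h.henergy).add ((integrable_const _).add S.hFint))
  refine i1.mono' ((EE_meas S h.hDuM).pow_const _).aestronglyMeasurable
    (Eventually.of_forall fun z => ?_)
  have hE := EE_nonneg S Du z
  have h1 := HDu_nonneg S Du z
  have h2 := HFf_nonneg S z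
  rw [Real.norm_of_nonneg (by positivity)]
  have a1 : ∀ x : ℝ, 0 ≤ x → ∀ t b : ℝ, 0 ≤ t → t ≤ b → x ^ t ≤ 1 + x ^ b := by
    intro x hx t b ht hb
    rcases le_total x 1 with h | h
    · have := Real.rpow_le_one hx h ht
      have : 0 ≤ x ^ b := by positivity
      linarith
    · have := Real.rpow_le_rpow_of_exponent_le h hb
      linarith
  have a2 := a1 _ hE t δ ht0 ht
  have a3 := a1 _ h2 δ 1 hδ.1.le hδ.2.le
  rw [Real.rpow_one] at a3
  have a4 : EE S Du z ^ δ ≤ HDu S Du z ^ δ + HFf S z ^ δ :=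
    Real.rpow_add_le_add_rpow h1 h2 hδ.1.le hδ.2.le
  linarith

theorem GG_int (S : Setting n N p q α L₁ L₂ aH) {u : Pt n → Vec N} {Du : Pt n → Mat N n} {δ : ℝ}
    (h : VeryWeakSolution S u Du δ) (hd : (q - 1) / p ≤ δ) (i : Fin N) (j : Fin n) :
    IntegrableOn (GG S Du i j) (cyl S.Ω S.T) := by
  obtain ⟨A0, hA0⟩ := S.haB
  have hp : 0 < p := by linarith [S.hp2]
  have hL : 0 ≤ L₂ := by linarith [S.hL₁, S.hL₁₂]
  have hpq : (p - 1) / p ≤ (q - 1) / p := by gcongr; linarith [S.hpq]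
  have p0 : 0 ≤ (p - 1) / p := div_nonneg (by linarith [S.hp2]) hp.le
  have i1 := EE_int S h p0 (hpq.trans hd)
  have i2 := EE_int S h (p0.trans hpq) hd
  refine Integrable.mono' ((i1.add (i2.const_mul A0)).const_mul (L₂ + 1))
    (GG_meas S h.hDuM i j).aestronglyMeasurable ?_
  filter_upwards [GG_le S Du] with z hz
  refine (hz i j).trans ?_
  have hE := EE_nonneg S Du z
  have : S.a z ≤ A0 := hA0 ⟨z, rfl⟩
  simp only [Pi.add_apply]
  gcongr

end sol

theorem integrableOn_mul_dtest {n : ℕ} {ψ : Pt n → ℝ} (hψ : ContDiff ℝ (⊤ : ℕ∞) ψ)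
    (hs : HasCompactSupport ψ) {v : Pt n → ℝ} {Q : Set (Pt n)} (hv : IntegrableOn v Q) (e : Pt n) :
    IntegrableOn (fun ζ => v ζ * fderiv ℝ ψ ζ e) Q := by
  have hc : Continuous (fun ζ => fderiv ℝ ψ ζ e) :=
    (hψ.continuous_fderiv (by simp)).clm_apply continuous_const
  obtain ⟨C, hC⟩ := (hs.fderiv_apply (𝕜 := ℝ) e).exists_bound_of_continuous hc
  exact hv.mul_bdd hc.aestronglyMeasurable (Eventually.of_forall hC)

section sol
variable {n N : ℕ} {p q α L₁ L₂ aH : ℝ}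

theorem rhsF_int (S : Setting n N p q α L₁ L₂ aH) {u : Pt n → Vec N} {Du : Pt n → Mat N n} {δ : ℝ}
    (h : VeryWeakSolution S u Du δ) (hd : (q - 1) / p ≤ δ) (i : Fin N) (j : Fin n) :
    IntegrableOn (fun z => rhsF S z i j) (cyl S.Ω S.T) := by
  obtain ⟨A0, hA0⟩ := S.haB
  have hp : 0 < p := by linarith [S.hp2]
  have hpq : (p - 1) / p ≤ (q - 1) / p := by gcongr; linarith [S.hpq]
  have p1 : 0 ≤ p - 1 := by linarith [S.hp2]
  have q1 : 0 ≤ q - 1 := by linarith [S.hp2, S.hpq]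
  have p0 : 0 ≤ (p - 1) / p := div_nonneg (by linarith [S.hp2]) hp.le
  have i1 := EE_int S h p0 (hpq.trans hd)
  have i2 := EE_int S h (p0.trans hpq) hd
  have h3 : Measurable fun z => S.F z i j :=
    (measurable_pi_apply j).comp ((measurable_pi_apply i).comp S.hFM)
  have h4 := measurable_mnorm S.hFM
  have hm : Measurable fun z => rhsF S z i j := by
    unfold rhsF
    exact ((h4.pow_const _).mul h3).add ((S.haM.mul (h4.pow_const _)).mul h3)
  refine Integrable.mono' (i1.add (i2.const_mul A0)) hm.aestronglyMeasurable
    (Eventually.of_forall fun z => ?_)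
  refine (rhsF_le S z i j).trans ?_
  have hE := EE_nonneg S Du z
  have : S.a z ≤ A0 := hA0 ⟨z, rfl⟩
  have a3 := F_le_EE S Du z p1
  have a4 := F_le_EE S Du z q1
  have ha := S.ha0 z
  have hA0' : 0 ≤ A0 := by linarith
  have := mnorm_nonneg' (S.F z)
  simp only [Pi.add_apply]
  gcongr

theorem dt_eq (S : Setting n N p q α L₁ L₂ aH) {u : Pt n → Vec N} {Du : Pt n → Mat N n} {δ : ℝ}
    (h : VeryWeakSolution S u Du δ) (hd : (q - 1) / p ≤ δ) (i : Fin N) {Q : Set (Pt n)}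
    (hQ : Q ⊆ cyl S.Ω S.T) (ψ : Pt n → ℝ) (hψ : ContDiff ℝ (⊤ : ℕ∞) ψ)
    (hs : HasCompactSupport ψ) (ht : tsupport ψ ⊆ Q) :
    ∫ z in Q, u z i * fderiv ℝ ψ z (0, 1) = ∫ z in Q, ∑ j, GG S Du i j z * dxj ψ j z := by
  have hz : ∀ z ∈ cyl S.Ω S.T \ Q, fderiv ℝ ψ z = 0 := fun z hz =>
    fderiv_of_notMem_tsupport ℝ fun h => hz.2 (ht h)
  rw [← setIntegral_eq_of_subset_of_forall_sdiff_eq_zero (cyl_meas S) hQ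
    (fun z hz' => by simp [hz z hz']),
    ← setIntegral_eq_of_subset_of_forall_sdiff_eq_zero (cyl_meas S) hQ
    (fun z hz' => by simp [dxj, hz z hz'])]
  set φ : Pt n → Vec N := fun z => ContinuousLinearMap.single ℝ (fun _ : Fin N => ℝ) i (ψ z)
    with hφ
  have hφk : ∀ z k, φ z k = if k = i then ψ z else 0 := by
    intro z k
    simp [hφ, Pi.single_apply]
  have hdiff : Differentiable ℝ ψ := hψ.differentiable (by simp)
  have hdt : ∀ z k, dtd φ z k = if k = i then fderiv ℝ ψ z (0, 1) else 0 := by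
    intro z k
    have : HasFDerivAt φ ((ContinuousLinearMap.single ℝ (fun _ : Fin N => ℝ) i).comp
        (fderiv ℝ ψ z)) z :=
      (ContinuousLinearMap.hasFDerivAt _).comp z (hdiff z).hasFDerivAt
    rw [dtd, this.fderiv]
    simp [Pi.single_apply]
  have hgr : ∀ z k j, gradm φ z k j = if k = i then dxj ψ j z else 0 := by
    intro z k j
    rw [gradm]
    by_cases hk : k = i
    · simp only [hφk, hk, if_true, dxj]
    · simp [hφk, hk]
  have hw := h.hweak φ ((ContinuousLinearMap.contDiff _).comp hψ)
    (hs.comp_left (g := ContinuousLinearMap.single ℝ (fun _ : Fin N => ℝ) i) (map_zero _))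
    ((closure_mono (Function.support_comp_subset (map_zero _) ψ)).trans (ht.trans hQ))
  have m : ∀ (B : Mat N n) z, mdot B (gradm φ z) = ∑ j, B i j * dxj ψ j z := by
    intro B z
    simp [mdot, hgr, Finset.sum_ite_irrel]
  have v : ∀ z, vdot (u z) (dtd φ z) = u z i * fderiv ℝ ψ z (0, 1) := by
    intro z; simp [vdot, hdt]
  simp only [m, v] at hw
  have hui : IntegrableOn (fun z => u z i) (cyl S.Ω S.T) :=
    Integrable.mono' h.huL1 ((measurable_pi_apply i).comp h.huM).aestronglyMeasurable
      (Eventually.of_forall fun z => abs_le_vnorm _ _)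
  have I1 : IntegrableOn (fun z => u z i * fderiv ℝ ψ z (0, 1)) (cyl S.Ω S.T) :=
    integrableOn_mul_dtest hψ hs hui _
  have I2 : IntegrableOn (fun z => ∑ j, GG S Du i j z * dxj ψ j z) (cyl S.Ω S.T) :=
    integrable_finsetSum _ fun j _ => integrableOn_mul_dtest hψ hs (GG_int S h hd i j) _
  have I3 : IntegrableOn (fun z => ∑ j, rhsF S z i j * dxj ψ j z) (cyl S.Ω S.T) :=
    integrable_finsetSum _ fun j _ => integrableOn_mul_dtest hψ hs (rhsF_int S h hd i j) _
  have e : ∀ z, -(u z i * fderiv ℝ ψ z (0, 1)) + ∑ j, S.A z (Du z) i j * dxj ψ j z =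
      (-(u z i * fderiv ℝ ψ z (0, 1)) + ∑ j, GG S Du i j z * dxj ψ j z) +
        ∑ j, rhsF S z i j * dxj ψ j z := by
    intro z
    rw [add_assoc, ← Finset.sum_add_distrib]
    congr 1
    refine Finset.sum_congr rfl fun j _ => ?_
    unfold GG; ring
  simp only [e] at hw
  have I1' : IntegrableOn (fun z => -(u z i * fderiv ℝ ψ z (0, 1))) (cyl S.Ω S.T) := I1.neg
  have I4 : IntegrableOn (fun z => -(u z i * fderiv ℝ ψ z (0, 1)) +
    ∑ j, GG S Du i j z * dxj ψ j z) (cyl S.Ω S.T) := I1'.add I2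
  rw [integral_add I4 I3, integral_add I1' I2, integral_neg] at hw
  linarith

theorem dx_eq (S : Setting n N p q α L₁ L₂ aH) {u : Pt n → Vec N} {Du : Pt n → Mat N n} {δ : ℝ}
    (h : VeryWeakSolution S u Du δ) (i : Fin N) (j : Fin n) {Q : Set (Pt n)}
    (hQ : Q ⊆ cyl S.Ω S.T) (ψ : Pt n → ℝ) (hψ : ContDiff ℝ (⊤ : ℕ∞) ψ)
    (hs : HasCompactSupport ψ) (ht : tsupport ψ ⊆ Q) :
    ∫ z in Q, u z i * dxj ψ j z = - ∫ z in Q, Du z i j * ψ z := by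
  rw [← setIntegral_eq_of_subset_of_forall_sdiff_eq_zero (cyl_meas S) hQ
    (fun z hz' => by
      simp [dxj, fderiv_of_notMem_tsupport ℝ (f := ψ) fun h => hz'.2 (ht h)]),
    ← setIntegral_eq_of_subset_of_forall_sdiff_eq_zero (cyl_meas S) hQ
    (fun z hz' => by
      simp [image_eq_zero_of_notMem_tsupport (f := ψ) fun h => hz'.2 (ht h)])]
  exact h.hgrad i j ψ hψ hs (ht.trans hQ)

end sol

theorem jensen_nu {Ω : Type*} [MeasurableSpace Ω] (ν : Measure Ω) [IsProbabilityMeasure ν]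
    {f : Ω → ℝ≥0∞} (hf : Measurable f) {t r : ℝ} (ht : 0 < t) (htr : t ≤ r) :
    ∫⁻ z, f z ^ t ∂ν ≤ (∫⁻ z, f z ^ r ∂ν) ^ (t / r) := by
  have hr : 0 < r := ht.trans_le htr
  have h := jensen_prob ν (f := fun z => f z ^ t) (hf.pow_const t).aemeasurable
    (r := r / t) ((one_le_div ht).2 htr)
  have e : ∀ z, (f z ^ t) ^ (r / t) = f z ^ r := fun z => by
    rw [← ENNReal.rpow_mul]; congr 1; field_simp
  simp only [e] at h
  calc ∫⁻ z, f z ^ t ∂ν = ((∫⁻ z, f z ^ t ∂ν) ^ (r / t)) ^ (t / r) := by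
        rw [← ENNReal.rpow_mul, show r / t * (t / r) = 1 by field_simp, ENNReal.rpow_one]
    _ ≤ _ := ENNReal.rpow_le_rpow h (by positivity)

section sol
variable {n N : ℕ} {p q α L₁ L₂ aH : ℝ}

theorem a_bound (S : Setting n N p q α L₁ L₂ aH) {Du : Pt n → Mat N n} {z₀ : Pt n} {π ρ δ : ℝ}
    (h : PHyp S Du z₀ π ρ δ) {s : ℝ} (hs0 : 0 < s) (hs : s ≤ 4 * ρ)
    (hQ : Qp p z₀ π s ⊆ cyl S.Ω S.T) {z : Pt n} (hz : z ∈ Qp p z₀ π s) :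
    S.a z ≤ (1 + 4 * aH) * π ^ (p - q) := by
  have hπ := h.hπ
  have hπ0 : 0 < π := by linarith
  have hρ := h.hρ.1
  have hα := S.hα
  have c := hQ hz
  have c0 := h.hz₀
  have hol := S.haHol z.1 c.1 z₀.1 c0.1 z.2 c.2 z₀.2 c0.2
  have hx : ‖z.1 - z₀.1‖ ≤ 4 * ρ := by
    have : dist z.1 z₀.1 < s := hz.1
    rw [dist_eq_norm] at this; linarith
  have h1 : π ^ (2 - p) ≤ 1 := Real.rpow_le_one_of_one_le_of_nonpos hπ.le (by linarith [S.hp2])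
  have hT : |z.2 - z₀.2| ≤ (4 * ρ) ^ 2 := by
    have h2 := hz.2
    rw [mem_Ioo] at h2
    have : π ^ (2 - p) * s ^ 2 ≤ (4 * ρ) ^ 2 := by
      calc π ^ (2 - p) * s ^ 2 ≤ 1 * s ^ 2 := by gcongr
        _ ≤ (4 * ρ) ^ 2 := by rw [one_mul]; gcongr
    rw [abs_le]; constructor <;> linarith [h2.1, h2.2]
  have b1 : ‖z.1 - z₀.1‖ ^ α ≤ (4 * ρ) ^ α := Real.rpow_le_rpow (norm_nonneg _) hx hα.1.le
  have b2 : |z.2 - z₀.2| ^ (α / 2) ≤ (4 * ρ) ^ α := by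
    refine (Real.rpow_le_rpow (abs_nonneg _) hT (by linarith [hα.1])).trans (le_of_eq ?_)
    rw [← Real.rpow_natCast, ← Real.rpow_mul (by positivity)]
    congr 1; push_cast; ring
  have b3 : (4 * ρ) ^ α ≤ 4 * π ^ (p - q) := by
    rw [Real.mul_rpow (by norm_num) hρ.le]
    have : (4 : ℝ) ^ α ≤ 4 := by
      calc (4 : ℝ) ^ α ≤ 4 ^ (1 : ℝ) := Real.rpow_le_rpow_of_exponent_le (by norm_num) hα.2
        _ = 4 := Real.rpow_one _
    have h3 := h.hdecay
    gcongr
  have b4 : S.a z₀ ≤ π ^ (p - q) := by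
    rw [Real.rpow_sub hπ0, le_div_iff₀ (by positivity)]
    exact h.hcase
  have b5 : S.a z - S.a z₀ ≤ aH * (4 * π ^ (p - q)) := by
    refine (le_abs_self _).trans (hol.trans ?_)
    have := S.haH
    gcongr
    exact max_le (b1.trans b3) (b2.trans b3)
  nlinarith

theorem kappa_bound (S : Setting n N p q α L₁ L₂ aH) {u : Pt n → Vec N} {Du : Pt n → Mat N n}
    {z₀ : Pt n} {π ρ δ : ℝ} (hv : VeryWeakSolution S u Du δ)
    (h : PHyp S Du z₀ π ρ δ) {s : ℝ} (hs : 2 * ρ ≤ s) (hs' : s ≤ 4 * ρ) {θ : ℝ} (hθ : 0 < θ)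
    (hθδ : θ ≤ δ) :
    ∫⁻ z, ENNReal.ofReal (EE S Du z) ^ θ ∂(nuQ (Qp p z₀ π s)) ≤
      ENNReal.ofReal (8 ^ (n + 2) * π ^ (θ * p)) := by
  have hπ := h.hπ
  have hπ0 : 0 < π := by linarith
  have hρ := h.hρ.1
  have hs0 : 0 < s := by linarith
  have hδ : 0 < δ := hv.hδ.1
  have hτ : ∀ x : ℝ, 0 < x → 0 < π ^ (2 - p) * x ^ 2 := fun x hx => by positivity
  have hEm := EE_meas S hv.hDuM
  have : IsProbabilityMeasure (nuQ (Qp p z₀ π s)) := nuQ_prob z₀ hs0 (hτ s hs0)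
  have j := jensen_nu (nuQ (Qp p z₀ π s)) (f := fun z => ENNReal.ofReal (EE S Du z))
    hEm.ennreal_ofReal hθ hθδ
  refine j.trans ?_
  have hsub : Qp p z₀ π s ⊆ Qp p z₀ π (16 * ρ) := by
    apply Qrs_mono _ (by linarith)
    have : s ≤ 16 * ρ := by linarith
    gcongr
  have v1 : volume (Qp p z₀ π (16 * ρ)) ≤ ENNReal.ofReal (8 ^ (n + 2)) * volume (Qp p z₀ π s) := by
    have m : Qp p z₀ π (16 * ρ) ⊆ Qp p z₀ π (8 * s) := by
      apply Qrs_mono _ (by linarith)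
      have : 16 * ρ ≤ 8 * s := by linarith
      gcongr
    refine (measure_mono m).trans (le_of_eq ?_)
    rw [Qp, Qp, Qrs_vol, Qrs_vol]
    have := Measure.addHaar_ball_mul_of_pos (volume : Measure (Spc n)) z₀.1
        (by norm_num : (0 : ℝ) < 8) s
    rw [this, Measure.addHaar_ball_center volume z₀.1 s, finrank_euclideanSpace_fin]
    rw [show 2 * (π ^ (2 - p) * (8 * s) ^ 2) = 8 ^ 2 * (2 * (π ^ (2 - p) * s ^ 2)) by ring,
      ENNReal.ofReal_mul (by norm_num), pow_add (8 : ℝ) n 2,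
      ENNReal.ofReal_mul (p := (8 : ℝ) ^ n) (by positivity)]
    ring
  have hint : IntegrableOn (fun z => EE S Du z ^ δ) (Qp p z₀ π (16 * ρ)) :=
    (EE_int S hv hδ.le le_rfl).mono_set h.hsub
  have c1 : ∫⁻ z, ENNReal.ofReal (EE S Du z) ^ δ ∂(nuQ (Qp p z₀ π (16 * ρ))) ≤
      ENNReal.ofReal (π ^ (δ * p)) := by
    refine le_trans (le_of_eq ?_) (ENNReal.ofReal_le_ofReal h.hup)
    rw [average, ofReal_integral_eq_lintegral_ofReal]
    · refine lintegral_congr fun z => ?_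
      exact ENNReal.ofReal_rpow_of_nonneg (EE_nonneg S Du z) hδ.le
    · refine Integrable.smul_measure hint ?_
      rw [Measure.restrict_apply_univ]
      exact ENNReal.inv_ne_top.2 (Qrs_vol_pos z₀ (by linarith) (hτ _ (by linarith)))
    · refine Eventually.of_forall fun z => ?_
      have := EE_nonneg S Du z
      exact Real.rpow_nonneg this _
  have vs0 : volume (Qp p z₀ π s) ≠ 0 := Qrs_vol_pos z₀ hs0 (hτ s hs0)
  have vst : volume (Qp p z₀ π s) ≠ ⊤ := Qrs_vol_top _ _ _
  have v0 : volume (Qp p z₀ π (16 * ρ)) ≠ 0 :=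
    Qrs_vol_pos z₀ (by linarith) (hτ _ (by linarith))
  have vt : volume (Qp p z₀ π (16 * ρ)) ≠ ⊤ := Qrs_vol_top _ _ _
  have c2 : ∫⁻ z, ENNReal.ofReal (EE S Du z) ^ δ ∂(nuQ (Qp p z₀ π s)) ≤
      ENNReal.ofReal (8 ^ (n + 2)) * ENNReal.ofReal (π ^ (δ * p)) := by
    rw [nuQ_lintegral] at c1 ⊢
    set I := ∫⁻ z in Qp p z₀ π (16 * ρ), ENNReal.ofReal (EE S Du z) ^ δ
    have c3 : I ≤ volume (Qp p z₀ π (16 * ρ)) * ENNReal.ofReal (π ^ (δ * p)) := by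
      calc I = volume (Qp p z₀ π (16 * ρ)) * ((volume (Qp p z₀ π (16 * ρ)))⁻¹ * I) := by
            rw [← mul_assoc, ENNReal.mul_inv_cancel v0 vt, one_mul]
        _ ≤ _ := by gcongr
    calc _ ≤ (volume (Qp p z₀ π s))⁻¹ * I := by
          gcongr; exact lintegral_mono_set hsub
      _ ≤ (volume (Qp p z₀ π s))⁻¹ * ((ENNReal.ofReal (8 ^ (n + 2)) * volume (Qp p z₀ π s)) *
          ENNReal.ofReal (π ^ (δ * p))) := by
          gcongr; exact c3.trans (by gcongr)
      _ = ((volume (Qp p z₀ π s))⁻¹ * volume (Qp p z₀ π s)) * (ENNReal.ofReal (8 ^ (n + 2)) *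
          ENNReal.ofReal (π ^ (δ * p))) := by ring
      _ = _ := by rw [ENNReal.inv_mul_cancel vs0 vst, one_mul]
  have h01 : θ / δ ≤ 1 := (div_le_one hδ).2 hθδ
  calc _ ≤ (ENNReal.ofReal (8 ^ (n + 2)) * ENNReal.ofReal (π ^ (δ * p))) ^ (θ / δ) :=
        ENNReal.rpow_le_rpow c2 (by positivity)
    _ = ENNReal.ofReal ((8 ^ (n + 2) * π ^ (δ * p)) ^ (θ / δ)) := by
        rw [← ENNReal.ofReal_mul (by positivity), ENNReal.ofReal_rpow_of_nonneg (by positivity)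
          (by positivity)]
    _ ≤ _ := by
        apply ENNReal.ofReal_le_ofReal
        rw [Real.mul_rpow (by positivity) (by positivity), ← Real.rpow_mul hπ0.le,
          show δ * p * (θ / δ) = θ * p by field_simp]
        gcongr
        calc ((8 : ℝ) ^ (n + 2)) ^ (θ / δ) ≤ (8 ^ (n + 2)) ^ (1 : ℝ) :=
              Real.rpow_le_rpow_of_exponent_le (one_le_pow₀ (by norm_num)) h01
          _ = _ := Real.rpow_one _

theorem flux_bound (S : Setting n N p q α L₁ L₂ aH) {u : Pt n → Vec N} {Du : Pt n → Mat N n}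
    {z₀ : Pt n} {π ρ δ : ℝ} (hv : VeryWeakSolution S u Du δ)
    (h : PHyp S Du z₀ π ρ δ) {s : ℝ} (hs0 : 0 < s) (hs' : s ≤ 4 * ρ)
    (hQ : Qp p z₀ π s ⊆ cyl S.Ω S.T) {θ : ℝ}
    (hθ : (q - 1) / p < θ) {κ C : ℝ} (hκ : 0 ≤ κ) (hC : 0 ≤ C) (hκC : κ ≤ C * π)
    (hK : ∫⁻ z, ENNReal.ofReal (EE S Du z) ^ θ ∂(nuQ (Qp p z₀ π s)) = ENNReal.ofReal (κ ^ (θ * p)))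
    (i : Fin N) :
    ∫⁻ z, ∑ j, ‖GG S Du i j z‖ₑ ∂(nuQ (Qp p z₀ π s)) ≤
      ENNReal.ofReal (n * ((L₂ + 1) * ((C ^ (p - 2) + (1 + 4 * aH) * C ^ (q - 2)) *
        (π ^ (p - 2) * κ)))) := by
  have hπ := h.hπ
  have hπ0 : 0 < π := by linarith
  have hp2 := S.hp2
  have hpq := S.hpq
  have hp : 0 < p := by linarith
  have haH := S.haH
  have hL : 0 ≤ L₂ := by linarith [S.hL₁, S.hL₁₂]
  have hτ : 0 < π ^ (2 - p) * s ^ 2 := by positivity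
  have : IsProbabilityMeasure (nuQ (Qp p z₀ π s)) := nuQ_prob z₀ hs0 hτ
  have hEm := EE_meas S hv.hDuM
  have hQm : MeasurableSet (Qp p z₀ π s) := Qrs_meas _ _ _
  have hθ0 : 0 < θ := lt_of_le_of_lt (div_nonneg (by linarith) hp.le) hθ
  have J : ∀ t, 2 < t → t ≤ q →
      ∫⁻ z, ENNReal.ofReal (EE S Du z) ^ ((t - 1) / p) ∂(nuQ (Qp p z₀ π s)) ≤
        ENNReal.ofReal (C ^ (t - 2) * (π ^ (t - 2) * κ)) := by
    intro t ht htq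
    have t1 : (t - 1) / p ≤ θ := le_trans (by gcongr) hθ.le
    refine (jensen_nu _ hEm.ennreal_ofReal (div_pos (by linarith) hp) t1).trans ?_
    rw [hK, ENNReal.ofReal_rpow_of_nonneg (by positivity)
      (div_nonneg (div_nonneg (by linarith) hp.le) hθ0.le), ← Real.rpow_mul hκ,
      show θ * p * ((t - 1) / p / θ) = t - 1 by field_simp]
    apply ENNReal.ofReal_le_ofReal
    rw [show t - 1 = (t - 2) + 1 by ring, Real.rpow_add_one' hκ (by linarith), ← mul_assoc,
      ← Real.mul_rpow hC hπ0.le]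
    have := Real.rpow_le_rpow hκ hκC (by linarith : 0 ≤ t - 2)
    gcongr
  have pt : ∀ᵐ z ∂(nuQ (Qp p z₀ π s)), ∑ j, ‖GG S Du i j z‖ₑ ≤
      ENNReal.ofReal (n * (L₂ + 1)) * (ENNReal.ofReal (EE S Du z) ^ ((p - 1) / p) +
        ENNReal.ofReal ((1 + 4 * aH) * π ^ (p - q)) *
          ENNReal.ofReal (EE S Du z) ^ ((q - 1) / p)) := by
    have g1 := ae_restrict_of_ae_restrict_of_subset hQ (GG_le S Du)
    refine Measure.ae_smul_measure ?_ _
    filter_upwards [g1, ae_restrict_mem hQm] with z hz hzQ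
    have hE := EE_nonneg S Du z
    have ha := a_bound S h hs0 hs' hQ hzQ
    have hz' : ∀ j, ‖GG S Du i j z‖ₑ ≤ ENNReal.ofReal ((L₂ + 1) * (EE S Du z ^ ((p - 1) / p) +
        ((1 + 4 * aH) * π ^ (p - q)) * EE S Du z ^ ((q - 1) / p))) := by
      intro j
      rw [Real.enorm_eq_ofReal_abs]
      refine ENNReal.ofReal_le_ofReal ((hz i j).trans ?_)
      gcongr
    refine (Finset.sum_le_sum fun j _ => hz' j).trans (le_of_eq ?_)
    rw [Finset.sum_const, Finset.card_univ, Fintype.card_fin, nsmul_eq_mul,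
      ENNReal.ofReal_rpow_of_nonneg hE (div_nonneg (by linarith) hp.le),
      ENNReal.ofReal_rpow_of_nonneg hE (div_nonneg (by linarith) hp.le),
      ← ENNReal.ofReal_mul (by positivity), ← ENNReal.ofReal_add (by positivity) (by positivity),
      ← ENNReal.ofReal_mul (by positivity), mul_assoc (n : ℝ),
      ENNReal.ofReal_mul (Nat.cast_nonneg n), ENNReal.ofReal_natCast]
  refine (lintegral_mono_ae pt).trans ?_
  rw [lintegral_const_mul' _ _ ENNReal.ofReal_ne_top,
    lintegral_add_left (hEm.ennreal_ofReal.pow_const _),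
    lintegral_const_mul' _ _ ENNReal.ofReal_ne_top]
  refine (mul_le_mul' le_rfl (add_le_add (J p hp2 hpq.le)
    (mul_le_mul' le_rfl (J q (by linarith) le_rfl)))).trans (le_of_eq ?_)
  rw [← ENNReal.ofReal_mul (by positivity), ← ENNReal.ofReal_add (by positivity) (by positivity),
    ← ENNReal.ofReal_mul (by positivity)]
  congr 1
  have : π ^ (p - 2) = π ^ (p - q) * π ^ (q - 2) := by
    rw [← Real.rpow_add hπ0]; congr 1; ring
  rw [this]; ring

end sol

theorem osc_bound {Ω : Type*} [MeasurableSpace Ω] (ν : Measure Ω) [IsProbabilityMeasure ν]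
    {f : Ω → ℝ} (hf : Measurable f) (hi : Integrable f ν) {r : ℝ} (hr : 1 ≤ r) :
    ∫⁻ z, ‖f z - ∫ w, f w ∂ν‖ₑ ^ r ∂ν ≤ ∫⁻ z, ∫⁻ w, ‖f z - f w‖ₑ ^ r ∂ν ∂ν := by
  refine lintegral_mono fun z => ?_
  have e : f z - ∫ w, f w ∂ν = ∫ w, (f z - f w) ∂ν := by
    rw [integral_sub (integrable_const _) hi]; simp
  have hm : Measurable fun w => ‖f z - f w‖ₑ := (measurable_const.sub hf).enorm
  refine le_trans ?_ (jensen_prob ν hm.aemeasurable hr)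
  rw [e]
  gcongr
  exact enorm_integral_le_lintegral_enorm _

section sol
variable {n N : ℕ} {p q α L₁ L₂ aH : ℝ}

theorem grad_bound (S : Setting n N p q α L₁ L₂ aH) (Du : Pt n → Mat N n) (i : Fin N) {θ : ℝ}
    (hθ : 0 < θ) (ν : Measure (Pt n)) :
    ∫⁻ z, (∑ j, ‖Du z i j‖ₑ) ^ (θ * p) ∂ν ≤
      ENNReal.ofReal ((n : ℝ) ^ (θ * p)) * ∫⁻ z, ENNReal.ofReal (EE S Du z) ^ θ ∂ν := by
  have hp : 0 < p := by linarith [S.hp2]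
  have hr : 0 < θ * p := by positivity
  rw [← lintegral_const_mul' _ _ ENNReal.ofReal_ne_top]
  refine lintegral_mono fun z => ?_
  have hE := EE_nonneg S Du z
  have hm := mnorm_nonneg' (Du z)
  have h1 : ∑ j, ‖Du z i j‖ₑ ≤ ENNReal.ofReal (n * mnorm (Du z)) := by
    refine (Finset.sum_le_sum (g := fun _ => ENNReal.ofReal (mnorm (Du z))) fun j _ => ?_).trans
      (le_of_eq ?_)
    · rw [Real.enorm_eq_ofReal_abs]
      exact ENNReal.ofReal_le_ofReal (abs_le_mnorm _ i j)
    · rw [Finset.sum_const, Finset.card_univ, Fintype.card_fin, nsmul_eq_mul,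
        ENNReal.ofReal_mul (Nat.cast_nonneg n), ENNReal.ofReal_natCast]
  calc (∑ j, ‖Du z i j‖ₑ) ^ (θ * p) ≤ ENNReal.ofReal (n * mnorm (Du z)) ^ (θ * p) :=
        ENNReal.rpow_le_rpow h1 hr.le
    _ = ENNReal.ofReal ((n : ℝ) ^ (θ * p)) * ENNReal.ofReal (mnorm (Du z) ^ (θ * p)) := by
        rw [ENNReal.ofReal_rpow_of_nonneg (by positivity) hr.le,
          Real.mul_rpow (Nat.cast_nonneg n) hm, ENNReal.ofReal_mul (by positivity)]
    _ ≤ _ := by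
        gcongr
        rw [ENNReal.ofReal_rpow_of_nonneg hE hθ.le]
        have := Du_le_EE S Du z hr.le
        rw [show θ * p / p = θ by field_simp] at this
        exact ENNReal.ofReal_le_ofReal this

theorem lhs_bound (u : Pt n → Vec N) (hu : Measurable u) (Q : Set (Pt n))
    [IsProbabilityMeasure (nuQ Q)] (hi : ∀ i, Integrable (fun z => u z i) (nuQ Q))
    {r s B : ℝ} (hr : 1 ≤ r) (hs : 0 < s) (hB : 0 ≤ B)
    (h : ∀ i, ∫⁻ z, ∫⁻ w, ‖u z i - u w i‖ₑ ^ r ∂(nuQ Q) ∂(nuQ Q) ≤ ENNReal.ofReal (B * s ^ r)) :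
    (⨍ z in Q, vnorm (u z - vavg u Q) ^ r / s ^ r) ≤ (N : ℝ) ^ r * B := by
  have hr0 : 0 ≤ r := by linarith
  have hsr : 0 < s ^ r := by positivity
  change ∫ z, vnorm (u z - vavg u Q) ^ r / s ^ r ∂(nuQ Q) ≤ _
  have hm : Measurable fun z => vnorm (u z - vavg u Q) ^ r / s ^ r :=
    ((measurable_vnorm (hu.sub measurable_const)).pow_const r).div_const _
  rw [integral_eq_lintegral_of_nonneg_ae (Eventually.of_forall fun z => by
    have := vnorm_nonneg' (u z - vavg u Q)
    simp only [Pi.zero_apply]; positivity) hm.aestronglyMeasurable]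
  refine ENNReal.toReal_le_of_le_ofReal (by positivity) ?_
  have hui : ∀ i, Measurable fun z => u z i := fun i => (measurable_pi_apply i).comp hu
  have pt : ∀ z, ENNReal.ofReal (vnorm (u z - vavg u Q) ^ r / s ^ r) ≤
      ENNReal.ofReal (s ^ r)⁻¹ * ((N : ℝ≥0∞) ^ (r - 1) *
        ∑ i, ‖u z i - ∫ w, u w i ∂(nuQ Q)‖ₑ ^ r) := by
    intro z
    have h0 := vnorm_nonneg' (u z - vavg u Q)
    rw [div_eq_inv_mul, ENNReal.ofReal_mul (by positivity)]
    gcongr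
    have h2 : ENNReal.ofReal (vnorm (u z - vavg u Q)) ≤ ∑ i, ‖u z i - ∫ w, u w i ∂(nuQ Q)‖ₑ := by
      refine (ENNReal.ofReal_le_ofReal (vnorm_le_sum _)).trans (le_of_eq ?_)
      rw [ENNReal.ofReal_sum_of_nonneg fun i _ => abs_nonneg _]
      refine Finset.sum_congr rfl fun i _ => ?_
      rw [Real.enorm_eq_ofReal_abs]
      rfl
    rw [← ENNReal.ofReal_rpow_of_nonneg h0 hr0]
    refine (ENNReal.rpow_le_rpow h2 hr0).trans ?_
    have := ENNReal.rpow_sum_le_const_mul_sum_rpow (s := (Finset.univ : Finset (Fin N)))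
      (f := fun i => ‖u z i - ∫ w, u w i ∂(nuQ Q)‖ₑ) hr
    simpa using this
  refine (lintegral_mono pt).trans ?_
  have hNt : (N : ℝ≥0∞) ^ (r - 1) ≠ ⊤ :=
    ENNReal.rpow_ne_top_of_nonneg (by linarith) (ENNReal.natCast_ne_top N)
  rw [lintegral_const_mul' _ _ ENNReal.ofReal_ne_top, lintegral_const_mul' _ _ hNt,
    lintegral_finsetSum _ fun i _ => ((hui i).sub_const _).enorm.pow_const r]
  calc _ ≤ ENNReal.ofReal (s ^ r)⁻¹ * ((N : ℝ≥0∞) ^ (r - 1) *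
        ∑ _i : Fin N, ENNReal.ofReal (B * s ^ r)) := by
        gcongr with i
        exact (osc_bound (nuQ Q) (hui i) (hi i) hr).trans (h i)
    _ = ENNReal.ofReal ((s ^ r)⁻¹ * ((N : ℝ) ^ (r - 1) * (N * (B * s ^ r)))) := by
        rw [Finset.sum_const, Finset.card_univ, Fintype.card_fin, nsmul_eq_mul,
          ENNReal.ofReal_mul (p := (s ^ r)⁻¹) (by positivity),
          ENNReal.ofReal_mul (p := (N : ℝ) ^ (r - 1)) (by positivity),
          ENNReal.ofReal_mul (p := (N : ℝ)) (Nat.cast_nonneg N), ENNReal.ofReal_natCast,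
          ← ENNReal.ofReal_rpow_of_nonneg (Nat.cast_nonneg N) (by linarith),
          ENNReal.ofReal_natCast]
    _ ≤ _ := by
        apply ENNReal.ofReal_le_ofReal
        have : (N : ℝ) ^ r = (N : ℝ) ^ (r - 1) * N := by
          rw [← Real.rpow_add_one' (Nat.cast_nonneg N) (by linarith)]; congr 1; ring
        rw [this]
        apply le_of_eq
        field_simp

end sol

/-- Lemma 4.2: Poincaré-type inequality in the `p`-intrinsic case. -/
theorem p_intrinsic_poincare (n N : ℕ) (p q α L₁ L₂ aH : ℝ) :
    ∃ c : ℝ, 0 < c ∧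
      ∀ (S : Setting n N p q α L₁ L₂ aH) (u : Pt n → Vec N) (Du : Pt n → Mat N n) (δ : ℝ),
        VeryWeakSolution S u Du δ →
        ∀ (z₀ : Pt n) (π ρ : ℝ), PHyp S Du z₀ π ρ δ →
        ∀ θ ∈ Set.Ioc ((q - 1) / p) δ, ∀ s ∈ Set.Icc (2 * ρ) (4 * ρ),
          (⨍ z in Qp p z₀ π s,
              vnorm (u z - vavg u (Qp p z₀ π s)) ^ (θ * p) / s ^ (θ * p))
            ≤ c * (⨍ z in Qp p z₀ π s, (HDu S Du z + HFf S z) ^ θ) := by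
  by_cases hne : Nonempty (Setting n N p q α L₁ L₂ aH)
  swap
  · exact ⟨1, one_pos, fun S => (hne ⟨S⟩).elim⟩
  obtain ⟨S₀⟩ := hne
  have hp2 := S₀.hp2
  have hpq := S₀.hpq
  have hp : 0 < p := by linarith
  have haH := S₀.haH
  have hL : 0 ≤ L₂ := by linarith [S₀.hL₁, S₀.hL₁₂]
  have hn1 : (1 : ℝ) ≤ n := by
    have := S₀.hn
    exact_mod_cast (by omega : 1 ≤ n)
  have hN1 : (1 : ℝ) ≤ N := by exact_mod_cast S₀.hN
  obtain ⟨M, hM0, hM⟩ := core_nu n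
  obtain ⟨C, hC⟩ : ∃ C : ℝ, C = 8 ^ (n + 2) := ⟨_, rfl⟩
  have hC1 : 1 ≤ C := by rw [hC]; exact one_le_pow₀ (by norm_num)
  obtain ⟨D, hD⟩ : ∃ D : ℝ, D = M * 2 ^ (n + 2) *
    (n * ((L₂ + 1) * (C ^ (p - 2) + (1 + 4 * aH) * C ^ (q - 2)))) := ⟨_, rfl⟩
  have hD0 : 0 ≤ D := by rw [hD]; positivity
  refine ⟨(N : ℝ) ^ p * (3 ^ p * (2 * (M * 2 ^ n * 2 ^ p) * (n : ℝ) ^ p + (1 + D) ^ p)),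
    by positivity, ?_⟩
  intro S u Du δ hv z₀ π ρ h θ hθ s hs
  have hπ := h.hπ
  have hπ0 : 0 < π := by linarith
  have hρ := h.hρ.1
  have hs0 : 0 < s := by linarith [hs.1]
  have hq1 : 0 < (q - 1) / p := div_pos (by linarith) hp
  have hθ0 : 0 < θ := hq1.trans hθ.1
  have hθ1 : θ < 1 := hθ.2.trans_lt hv.hδ.2
  have hd : (q - 1) / p ≤ δ := (hθ.1.trans_le hθ.2).le
  obtain ⟨r, hr⟩ : ∃ r : ℝ, r = θ * p := ⟨_, rfl⟩
  have hr1 : 1 ≤ r := by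
    have := (div_lt_iff₀ hp).1 hθ.1
    rw [hr]; linarith
  have hr0 : 0 < r := by linarith
  have hrp : r ≤ p := by rw [hr]; nlinarith
  obtain ⟨τ, hτ⟩ : ∃ τ : ℝ, τ = π ^ (2 - p) * s ^ 2 := ⟨_, rfl⟩
  have hτ0 : 0 < τ := by rw [hτ]; positivity
  have hQe : Qp p z₀ π s = Qrs z₀ s τ := by rw [hτ]; rfl
  have hQ : Qp p z₀ π s ⊆ cyl S.Ω S.T := by
    refine subset_trans ?_ h.hsub
    refine Qrs_mono z₀ (by linarith [hs.2]) ?_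
    have : s ≤ 16 * ρ := by linarith [hs.2]
    gcongr
  have hint : ∀ {f : Pt n → ℝ}, IntegrableOn f (cyl S.Ω S.T) →
      Integrable f (nuQ (Qp p z₀ π s)) := by
    intro f hf
    refine (hf.mono_set hQ).integrable.smul_measure ?_
    rw [Measure.restrict_apply_univ, hQe]
    exact ENNReal.inv_ne_top.2 (Qrs_vol_pos z₀ hs0 hτ0)
  have hprob : IsProbabilityMeasure (nuQ (Qp p z₀ π s)) := nuQ_prob z₀ hs0 (hτ ▸ hτ0)
  obtain ⟨K, hKd⟩ : ∃ K : ℝ, K = ∫ z, EE S Du z ^ θ ∂(nuQ (Qp p z₀ π s)) := ⟨_, rfl⟩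
  have hK0 : 0 ≤ K := by
    rw [hKd]
    exact integral_nonneg fun z => Real.rpow_nonneg (EE_nonneg S Du z) _
  have hKl : ∫⁻ z, ENNReal.ofReal (EE S Du z) ^ θ ∂(nuQ (Qp p z₀ π s)) = ENNReal.ofReal K := by
    rw [hKd, ofReal_integral_eq_lintegral_ofReal (hint (EE_int S hv hθ0.le hθ.2))
      (Eventually.of_forall fun z => Real.rpow_nonneg (EE_nonneg S Du z) _)]
    exact lintegral_congr fun z => ENNReal.ofReal_rpow_of_nonneg (EE_nonneg S Du z) hθ0.le
  obtain ⟨κ, hκ⟩ : ∃ κ : ℝ, κ = K ^ (1 / r) := ⟨_, rfl⟩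
  have hκ0 : 0 ≤ κ := by rw [hκ]; positivity
  have hκr : κ ^ r = K := by
    rw [hκ, ← Real.rpow_mul hK0, one_div_mul_cancel hr0.ne', Real.rpow_one]
  have hκC : κ ≤ C * π := by
    have h1 := kappa_bound S hv h hs.1 hs.2 hθ0 hθ.2
    rw [hKl, ENNReal.ofReal_le_ofReal_iff (by positivity), ← hC, ← hr] at h1
    rw [← Real.rpow_le_rpow_iff hκ0 (by positivity) hr0, hκr,
      Real.mul_rpow (by positivity) hπ0.le]
    refine h1.trans ?_
    gcongr
    exact Real.self_le_rpow_of_one_le hC1 hr1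
  have hKl' : ∫⁻ z, ENNReal.ofReal (EE S Du z) ^ θ ∂(nuQ (Qp p z₀ π s)) =
      ENNReal.ofReal (κ ^ (θ * p)) := by rw [hKl, ← hr, hκr]
  have hui : ∀ i, IntegrableOn (fun z => u z i) (cyl S.Ω S.T) := fun i =>
    hv.huL1.mono' ((measurable_pi_apply i).comp hv.huM).aestronglyMeasurable
      (Eventually.of_forall fun z => abs_le_vnorm (u z) i)
  have hDm : ∀ i j, Measurable fun z => Du z i j := fun i j =>
    (measurable_pi_apply j).comp ((measurable_pi_apply i).comp hv.hDuM)
  have hDi : ∀ i j, IntegrableOn (fun z => Du z i j) (cyl S.Ω S.T) := fun i j =>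
    hv.hDuL1.mono' (hDm i j).aestronglyMeasurable
      (Eventually.of_forall fun z => abs_le_mnorm (Du z) i j)
  obtain ⟨B, hB⟩ : ∃ B : ℝ, B = 3 ^ r * (2 * (M * 2 ^ n * 2 ^ r) * (n : ℝ) ^ r + D ^ r) * K :=
    ⟨_, rfl⟩
  have hB0 : 0 ≤ B := by rw [hB]; positivity
  have main : ∀ i, ∫⁻ z, ∫⁻ w, ‖u z i - u w i‖ₑ ^ r ∂(nuQ (Qp p z₀ π s)) ∂(nuQ (Qp p z₀ π s)) ≤
      ENNReal.ofReal (B * s ^ r) := by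
    intro i
    have h1 := hM z₀ s (π ^ (2 - p) * s ^ 2) hs0 (by positivity) (fun z => u z i)
      (fun j z => Du z i j) (fun j => GG S Du i j)
      ((hui i).mono_set hQ) (hDm i) (fun j => (hDi i j).mono_set hQ) (GG_meas S hv.hDuM i)
      (fun j => (GG_int S hv hd i j).mono_set hQ)
      (fun j ψ a b c => dx_eq S hv i j hQ ψ a b c)
      (fun ψ a b c => dt_eq S hv hd i hQ ψ a b c) r hr1
    change _ ≤ 3 ^ r * (2 * (ENNReal.ofReal M * 2 ^ n * ENNReal.ofReal (2 * s) ^ r) *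
        (∫⁻ z, (∑ j, ‖Du z i j‖ₑ) ^ r ∂(nuQ (Qp p z₀ π s)))
        + (ENNReal.ofReal (M * 2 ^ (n + 2) * (π ^ (2 - p) * s ^ 2) / s) *
          ∫⁻ z, ∑ j, ‖GG S Du i j z‖ₑ ∂(nuQ (Qp p z₀ π s))) ^ r) at h1
    refine h1.trans ?_
    have h2 := grad_bound S Du i hθ0 (nuQ (Qp p z₀ π s))
    rw [hKl, ← hr] at h2
    have h3 := flux_bound S hv h hs0 hs.2 hQ hθ.1 hκ0 (by linarith) hκC hKl' i
    have h4 : ENNReal.ofReal (M * 2 ^ (n + 2) * (π ^ (2 - p) * s ^ 2) / s) *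
          ∫⁻ z, ∑ j, ‖GG S Du i j z‖ₑ ∂(nuQ (Qp p z₀ π s)) ≤ ENNReal.ofReal (D * (s * κ)) := by
      refine (mul_le_mul_right h3 _).trans ?_
      rw [← ENNReal.ofReal_mul (by positivity)]
      apply ENNReal.ofReal_le_ofReal
      have e : π ^ (2 - p) * π ^ (p - 2) = 1 := by
        rw [← Real.rpow_add hπ0]; simp
      apply le_of_eq
      rw [hD]
      calc _ = (π ^ (2 - p) * π ^ (p - 2)) * (s ^ 2 / s) * (M * 2 ^ (n + 2) *
            (n * ((L₂ + 1) * (C ^ (p - 2) + (1 + 4 * aH) * C ^ (q - 2)))) * κ) := by ring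
        _ = _ := by
          rw [e, show s ^ 2 / s = s by field_simp]; ring
    calc _ ≤ 3 ^ r * (2 * (ENNReal.ofReal M * 2 ^ n * ENNReal.ofReal (2 * s) ^ r) *
        (ENNReal.ofReal ((n : ℝ) ^ r) * ENNReal.ofReal K)
        + ENNReal.ofReal (D * (s * κ)) ^ r) := by gcongr
      _ = ENNReal.ofReal (3 ^ r * (2 * (M * 2 ^ n * (2 * s) ^ r) * ((n : ℝ) ^ r * K) +
            (D * (s * κ)) ^ r)) := by
          rw [ENNReal.ofReal_rpow_of_nonneg (by positivity) hr0.le,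
            ENNReal.ofReal_rpow_of_nonneg (by positivity) hr0.le,
            ENNReal.ofReal_mul (p := (3 : ℝ) ^ r) (by positivity),
            ENNReal.ofReal_add (by positivity) (by positivity),
            ENNReal.ofReal_mul (p := 2 * (M * 2 ^ n * (2 * s) ^ r)) (by positivity),
            ENNReal.ofReal_mul (p := (n : ℝ) ^ r) (by positivity),
            ENNReal.ofReal_mul (p := 2) (by positivity),
            ENNReal.ofReal_mul (p := M * 2 ^ n) (by positivity),
            ENNReal.ofReal_mul (p := M) (by positivity),
            ENNReal.ofReal_pow (by norm_num),
            ← ENNReal.ofReal_rpow_of_nonneg (x := 3) (by norm_num) hr0.le]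
          simp
      _ ≤ _ := by
          apply ENNReal.ofReal_le_ofReal
          apply le_of_eq
          rw [Real.mul_rpow (by norm_num) hs0.le, Real.mul_rpow hD0 (by positivity),
            Real.mul_rpow hs0.le hκ0, hκr, hB]
          ring
  have fin := lhs_bound u hv.huM (Qp p z₀ π s) (fun i => hint (hui i)) hr1 hs0 hB0 main
  have hR : (⨍ z in Qp p z₀ π s, (HDu S Du z + HFf S z) ^ θ) = K := by rw [hKd]; rfl
  rw [hR, ← hr]
  refine fin.trans ?_
  rw [hB, ← mul_assoc]
  refine mul_le_mul_of_nonneg_right ?_ hK0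
  have hDD : D ^ r ≤ (1 + D) ^ p :=
    (Real.rpow_le_rpow hD0 (by linarith) hr0.le).trans
      (Real.rpow_le_rpow_of_exponent_le (by linarith) hrp)
  gcongr <;> norm_num
end
end
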